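/- Let p be a prime with p ≡ 1 (mod 4) and 2^{p−1} ≡ 1 (mod p^2), let q1 be a prime factor of p − 2 such that q1^{p−1} ≢ 1 (mod p^2), let n be a composite number, let d0 be the squarefree part of 4·q1^2 − p^n and c the positive integer with 4·q1^2 − p^n = c^2·d0. Then for any prime p4 dividing n, there are no integers u, v and sign ε ∈ {+1, −1} such that (u + v·√d0)^{p4} = ε·(2·q1 + c·√d0) in ℤ[√d0]. -/

import Mathlib

/-!
Write the supposed root with the sign absorbed as `β`, so that `β ^ ℓ = 2 * q1 + c√d0` with `ℓ = p4`
odd, `n = ℓ * j` and `N(β) = p ^ j`. Its real part is even and divides `2 * q1`, so it is `2 * w`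
with `w = ±1` or `w = ±q1`, and `(4 * w) ^ ℓ ≡ 4 * q1` modulo `p ^ j`. If `w = ±1`, then `q1` is a
product of powers of `2` and `±1` modulo `p ^ 2`, hence `q1 ^ (p - 1) ≡ 1`, which is excluded. If
`w = ±q1`, lifting the exponent gives `p ^ (j - 1) ∣ ℓ - 1`, so `ℓ` is very large compared with
`N(β)`, while `Re(β ^ ℓ) ^ 2 = Re(β) ^ 2 < N(β)`. For such large `ℓ` this contradicts a lower bound
for linear forms in two logarithms (here `arg β` and `π`), obtained from interpolation determinants.
That bound needs `p` to be at least `2 ^ 19` or `j` at least `3`; the only smaller admissible prime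
is `1093`, for which `q1 = 1091` forces `j` to be at least `3`.
-/

/-- Boolean test for `2 ^ n % m = 1`. Reducing `2 ^ 256` modulo `m` first keeps the intermediate
powers small, which makes the kernel evaluation below feasible. -/
def twoPowModIsOne (n m : ℕ) : Bool :=
  ((2 ^ 256 % m) ^ (n / 256) * 2 ^ (n % 256) % m).beq 1

theorem twoPowModIsOne_iff {n m : ℕ} : twoPowModIsOne n m ↔ 2 ^ n % m = 1 := by
  rw [twoPowModIsOne, Nat.beq_eq, Nat.mul_mod, ← Nat.pow_mod, ← Nat.mul_mod, ← pow_mul, ← pow_add,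
    Nat.div_add_mod]

theorem twoPowModIsOne_search : ∀ i < 256, (List.range 512).all (fun k =>
    !twoPowModIsOne (2048 * i + 4 * k) ((2048 * i + 4 * k + 1) ^ 2) ||
      (2048 * i + 4 * k).beq 0 || (2048 * i + 4 * k).beq 1092) = true := by
  decide +kernel

theorem eq_1093_of_two_pow_modEq_one {p : ℕ} (hp : p % 4 = 1) (hp1 : p ≠ 1) (hlt : p < 2 ^ 19)
    (hw : 2 ^ (p - 1) ≡ 1 [MOD p ^ 2]) : p = 1093 := by
  have htest : twoPowModIsOne (p - 1) (p ^ 2) := by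
    rw [twoPowModIsOne_iff, hw, Nat.mod_eq_of_lt (Nat.one_lt_pow two_ne_zero (by omega))]
  have hsearch := List.all_eq_true.mp (twoPowModIsOne_search (p / 2048) (by omega))
    (p % 2048 / 4) (List.mem_range.mpr (by omega))
  rw [show 2048 * (p / 2048) + 4 * (p % 2048 / 4) = p - 1 by omega,
    Nat.sub_add_cancel (by omega), htest] at hsearch
  simp only [Bool.not_true, Bool.false_or, Bool.or_eq_true, Nat.beq_eq] at hsearch
  omega

section ZeroEstimate

open Matrix Polynomial

theorem coeff_prod_sum_of_natDegree_le {R ι : Type*} [CommRing R] (s : Finset ι) (f : ι → R[X])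
    (d : ι → ℕ) (h : ∀ i ∈ s, (f i).natDegree ≤ d i) :
    (∏ i ∈ s, f i).coeff (∑ i ∈ s, d i) = ∏ i ∈ s, (f i).coeff (d i) := by
  classical
  induction s using Finset.induction_on with
  | empty => simp
  | insert a s ha ih =>
    obtain ⟨hfa, hfs⟩ := (Finset.forall_mem_insert _ _ _).mp h
    rw [Finset.prod_insert ha, Finset.sum_insert ha, Finset.prod_insert ha,
      coeff_mul_add_eq_of_natDegree_le hfa, ih hfs]
    exact (natDegree_prod_le s f).trans (Finset.sum_le_sum hfs)

theorem coeff_det_sum_of_natDegree_le {R ι : Type*} [CommRing R] [Fintype ι] [DecidableEq ι]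
    (D : Matrix ι ι R[X]) (d : ι → ℕ) (h : ∀ i j, (D i j).natDegree ≤ d j) :
    D.det.coeff (∑ j, d j) = (of fun i j => (D i j).coeff (d j)).det := by
  simp only [det_apply, finsetSum_coeff, coeff_smul, of_apply]
  refine Finset.sum_congr rfl fun σ _ => ?_
  rw [coeff_prod_sum_of_natDegree_le _ _ _ fun i _ => h _ i]

theorem natDegree_det_le_sum {R ι : Type*} [CommRing R] [Fintype ι] [DecidableEq ι]
    (D : Matrix ι ι R[X]) (d : ι → ℕ) (h : ∀ i j, (D i j).natDegree ≤ d j) :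
    D.det.natDegree ≤ ∑ j, d j := by
  rw [det_apply]
  refine natDegree_sum_le_of_forall_le _ _ fun σ _ => (natDegree_smul_le _ _).trans ?_
  exact (natDegree_prod_le _ _).trans (Finset.sum_le_sum fun i _ => h _ i)

section Casorati

variable {A : Type*} [CommRing A] [IsDomain A]

/-- The Casorati matrix of the sequences `r ↦ w j ^ r * (p j) (x + M * r)`, with the common factor
`w j ^ r` of column `j` removed, as a matrix of polynomials in the starting point `x`. -/
noncomputable def casorati {A : Type*} [CommRing A] {n : ℕ} (w : Fin n → A) (p : Fin n → A[X])
    (M : A) : Matrix (Fin n) (Fin n) A[X] :=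
  of fun i j => C (w j ^ (i : ℕ)) * (p j).comp (X + C (M * (i : ℕ)))

theorem natDegree_casorati_le {n : ℕ} (w : Fin n → A) (p : Fin n → A[X]) (M : A) (i j : Fin n) :
    (casorati w p M i j).natDegree ≤ (p j).natDegree := by
  have hcomp : ((p j).comp (X + C (M * (i : ℕ)))).natDegree = (p j).natDegree := by
    rw [natDegree_comp, natDegree_X_add_C, mul_one]
  exact (natDegree_C_mul_le _ _).trans_eq hcomp

theorem coeff_casorati_natDegree {n : ℕ} (w : Fin n → A) (p : Fin n → A[X]) (M : A)
    (i j : Fin n) :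
    (casorati w p M i j).coeff (p j).natDegree = (p j).leadingCoeff * w j ^ (i : ℕ) := by
  have hcomp := coeff_comp_degree_mul_degree (p := p j) (q := X + C (M * (i : ℕ)))
    (by rw [natDegree_X_add_C]; exact one_ne_zero)
  rw [natDegree_X_add_C, mul_one, leadingCoeff_X_add_C, one_pow, mul_one] at hcomp
  rw [casorati, of_apply, coeff_C_mul, hcomp, mul_comm]

theorem det_casorati_ne_zero {n : ℕ} {w : Fin n → A} (hw : Function.Injective w)
    {p : Fin n → A[X]} (hp : ∀ j, p j ≠ 0) (M : A) : (casorati w p M).det ≠ 0 := by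
  intro h0
  have hcoeff := coeff_det_sum_of_natDegree_le _ _ (natDegree_casorati_le w p M)
  have hvand : (of fun i j => (casorati w p M i j).coeff (p j).natDegree) =
      of fun i j => (p j).leadingCoeff * (vandermonde w)ᵀ i j := by
    ext i j
    exact coeff_casorati_natDegree w p M i j
  rw [h0, coeff_zero, hvand, det_mul_row, det_transpose, eq_comm] at hcoeff
  refine mul_ne_zero (Finset.prod_ne_zero_iff.mpr fun j _ => ?_)
    (det_vandermonde_ne_zero_iff.mpr hw) hcoeff
  exact leadingCoeff_ne_zero.mpr (hp j)

theorem eval_det_casorati_eq_zero {n : ℕ} [NeZero n] {w : Fin n → A} (hw : ∀ j, w j ≠ 0)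
    {p : Fin n → A[X]} {M x : A} {r : ℕ}
    (h : ∀ i < n, ∑ j, w j ^ (i + r) * (p j).eval (x + M * i) = 0) :
    (casorati w p M).det.eval x = 0 := by
  rw [← coe_evalRingHom, RingHom.map_det]
  refine exists_mulVec_eq_zero_iff.mp ⟨fun j => w j ^ r, fun h0 => ?_, ?_⟩
  · exact pow_ne_zero r (hw 0) (congrFun h0 0)
  · ext i
    refine (Finset.sum_congr rfl fun j _ => ?_).trans (h i i.2)
    simp only [RingHom.mapMatrix_apply, map_apply, casorati, of_apply, coe_evalRingHom, eval_mul,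
      eval_C, eval_comp, eval_add, eval_X]
    ring

theorem mul_le_sum_natDegree_of_sum_pow_mul_eval_eq_zero {n R S : ℕ} [NeZero n] {w : Fin n → A}
    (hw : Function.Injective w) (hw0 : ∀ j, w j ≠ 0) {p : Fin n → A[X]} (hp : ∀ j, p j ≠ 0)
    {M : A} {c : Fin S → A}
    (hx : Function.Injective fun t : Fin R × Fin S => M * (t.1 : ℕ) + c t.2)
    (h : ∀ r < n + R, ∀ s, ∑ j, w j ^ r * (p j).eval (M * r + c s) = 0) :
    R * S ≤ ∑ j, (p j).natDegree := by
  by_contra! hlt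
  refine det_casorati_ne_zero hw hp M (eq_zero_of_natDegree_lt_card_of_eval_eq_zero _ hx
    (fun t => eval_det_casorati_eq_zero hw0 (r := t.1) fun i hi => ?_) ?_)
  · refine Eq.trans ?_ (h (i + t.1) (by omega) t.2)
    push_cast
    ring_nf
  · rw [Fintype.card_prod, Fintype.card_fin, Fintype.card_fin]
    exact (natDegree_det_le_sum _ _ (natDegree_casorati_le w p M)).trans_lt hlt

theorem eq_zero_of_sum_pow_mul_eval_eq_zero {K L R S : ℕ} {w : Fin L → A}
    (hw : Function.Injective w) (hw0 : ∀ l, w l ≠ 0) {p : Fin L → A[X]}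
    (hp : ∀ l, (p l).degree < K) {M : A} {c : Fin S → A}
    (hx : Function.Injective fun t : Fin R × Fin S => M * (t.1 : ℕ) + c t.2)
    (hcard : L * K < R * S + L)
    (h : ∀ r < L + R, ∀ s, ∑ l, w l ^ r * (p l).eval (M * r + c s) = 0) : p = 0 := by
  classical
  by_contra hne
  obtain ⟨l₀, hl₀⟩ := Function.ne_iff.mp hne
  let n := Fintype.card {l // p l ≠ 0}
  let e : Fin n ≃ {l // p l ≠ 0} := (Fintype.equivFin _).symm
  have hnL : n ≤ L := (Fintype.card_subtype_le _).trans_eq (Fintype.card_fin L)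
  have : NeZero n := ⟨(Fintype.card_pos_iff.mpr ⟨⟨l₀, hl₀⟩⟩).ne'⟩
  have hdeg (l) (hl : p l ≠ 0) : (p l).natDegree < K := (natDegree_lt_iff_degree_lt hl).mpr (hp l)
  have hle := mul_le_sum_natDegree_of_sum_pow_mul_eval_eq_zero (w := fun j => w (e j))
    (hw.comp (Subtype.val_injective.comp e.injective)) (fun j => hw0 _) (fun j => (e j).2) hx
    fun r hr s => by
      rw [e.sum_comp fun l => w l ^ r * (p l).eval (M * r + c s), ← h r (by omega) s,
        ← Fintype.sum_subtype_add_sum_subtype (p · ≠ 0), left_eq_add]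
      refine Finset.sum_eq_zero fun l _ => ?_
      rw [not_not.mp l.2, eval_zero, mul_zero]
  have hsum : ∑ j, (p (e j)).natDegree ≤ n * (K - 1) := by
    simpa using Finset.sum_le_card_nsmul Finset.univ (fun j => (p (e j)).natDegree) (K - 1)
      fun j _ => Nat.le_pred_of_lt (hdeg _ (e j).2)
  have hLK : L * (K - 1) + L = L * K := by
    rw [← Nat.mul_succ, Nat.succ_eq_add_one, Nat.sub_add_cancel (Nat.zero_lt_of_lt (hdeg l₀ hl₀))]
  have := hsum.trans (Nat.mul_le_mul_right _ hnL)
  omega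

end Casorati

theorem exists_det_submatrix_ne_zero {F ι κ : Type*} [Field F] [Finite ι] [Fintype κ]
    [DecidableEq κ] {A : Matrix ι κ F} (hA : Function.Injective A.mulVec) :
    ∃ f : κ → ι, (A.submatrix f id).det ≠ 0 := by
  have := Fintype.ofFinite ι
  have hrank : A.rank = Fintype.card κ := by
    rw [Matrix.rank, LinearMap.finrank_range_of_inj hA, Module.finrank_fintype_fun_eq_card]
  have hspan : Submodule.span F (Set.range A.row) = ⊤ := by
    apply Submodule.eq_top_of_finrank_eq
    rw [← rank_eq_finrank_span_row, hrank, Module.finrank_fintype_fun_eq_card]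
  obtain ⟨b, hb, hbspan, hli⟩ := exists_linearIndependent F (Set.range A.row)
  let B : Module.Basis b F (κ → F) := .mk hli (by simp [hbspan, hspan])
  let e : κ ≃ b := (Pi.basisFun F κ).indexEquiv B
  choose f hf using fun k => hb (e k).2
  have hrows : LinearIndependent F (A.submatrix f id).row := by
    rw [show (A.submatrix f id).row = Subtype.val ∘ e from funext hf]
    exact hli.comp e e.injective
  refine ⟨f, ((isUnit_iff_isUnit_det _).mp ?_).ne_zero⟩
  exact linearIndependent_rows_iff_isUnit.mp hrows

end ZeroEstimate

section InterpolationDeterminant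

open Matrix

theorem exists_eq_sum_add_pow_mul {f : ℂ → ℂ} (hf : Differentiable ℂ f) (N : ℕ) :
    ∃ (c : ℕ → ℂ) (g : ℂ → ℂ), Differentiable ℂ g ∧
      ∀ x, f x = ∑ n ∈ Finset.range N, c n * x ^ n + x ^ N * g x := by
  induction N with
  | zero => exact ⟨0, f, hf, by simp⟩
  | succ N ih =>
    obtain ⟨c, g, hg, h⟩ := ih
    refine ⟨Function.update c N (g 0), dslope g 0, ?_, fun x => ?_⟩
    · exact differentiableOn_univ.mp
        ((Complex.differentiableOn_dslope Filter.univ_mem).mpr hg.differentiableOn)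
    · have hgx : g x = g 0 + x * dslope g 0 x := by
        rw [← sub_eq_iff_eq_add', ← sub_smul_dslope g 0 x, sub_zero, smul_eq_mul]
      have hc : ∑ n ∈ Finset.range N, Function.update c N (g 0) n * x ^ n =
          ∑ n ∈ Finset.range N, c n * x ^ n := Finset.sum_congr rfl fun n hn => by
        rw [Function.update_of_ne (Finset.mem_range.mp hn).ne]
      rw [h, Finset.sum_range_succ, Function.update_self, hc, hgx]
      ring

theorem differentiable_det {n : Type*} [Fintype n] [DecidableEq n] {A : ℂ → Matrix n n ℂ}
    (hA : ∀ i j, Differentiable ℂ fun w => A w i j) : Differentiable ℂ fun w => (A w).det := by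
  simp only [det_apply]
  fun_prop

theorem diagonal_pow_mul_diagonal_pow_sub {R : Type*} [CommSemiring R] {N : ℕ} (w : R) :
    diagonal (fun n : Fin N => w ^ (n : ℕ)) * diagonal (fun n : Fin N => w ^ (N - n : ℕ)) =
      w ^ N • (1 : Matrix (Fin N) (Fin N) R) := by
  rw [diagonal_mul_diagonal, smul_one_eq_diagonal]
  congr 1
  ext n
  rw [← pow_add, Nat.add_sub_cancel' n.2.le]

/- Modulo `w ^ N` the matrix is a product `vandermonde z * diagonal (w ^ n) * C`, and a multiple of
`w ^ N` is also divisible by each `w ^ n` with `n < N`. -/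
theorem exists_det_eq_mul_pow {N : ℕ} {z : Fin N → ℂ} (hz : Function.Injective z)
    {f : Fin N → ℂ → ℂ} (hf : ∀ j, Differentiable ℂ (f j)) (E : Matrix (Fin N) (Fin N) ℂ) :
    ∃ G : ℂ → ℂ, Differentiable ℂ G ∧ ∀ w,
      (of fun i j => f j (w * z i) + w ^ N * E i j).det = G w * w ^ (∑ n : Fin N, (n : ℕ)) := by
  choose c g hg hfg using fun j => exists_eq_sum_add_pow_mul (hf j) N
  let V := vandermonde z
  have hV : IsUnit V.det := (det_vandermonde_ne_zero_iff.mpr hz).isUnit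
  let H (w : ℂ) : Matrix (Fin N) (Fin N) ℂ := of fun i j => z i ^ N * g j (w * z i) + E i j
  let D (w : ℂ) : Matrix (Fin N) (Fin N) ℂ :=
    (of fun (n j : Fin N) => c j n) + diagonal (fun n : Fin N => w ^ (N - n : ℕ)) * (V⁻¹ * H w)
  refine ⟨fun w => V.det * (D w).det, ?_, fun w => ?_⟩
  · refine (differentiable_const _).mul (differentiable_det fun i j => ?_)
    simp only [D, Matrix.add_apply, diagonal_mul, of_apply]
    simp only [mul_apply, H, of_apply]
    fun_prop
  · have hfactor : (of fun i j => f j (w * z i) + w ^ N * E i j) =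
        V * (diagonal (fun n : Fin N => w ^ (n : ℕ)) * D w) := by
      simp only [D]
      rw [mul_add, ← mul_assoc _ _ (V⁻¹ * _), diagonal_pow_mul_diagonal_pow_sub, Matrix.smul_mul,
        one_mul, mul_add, Matrix.mul_smul, mul_nonsing_inv_cancel_left _ _ hV]
      ext i j
      rw [Matrix.add_apply, mul_apply]
      simp only [H, V, of_apply, Matrix.smul_apply, diagonal_mul, hfg,
        vandermonde_apply, smul_eq_mul, Finset.sum_range, mul_pow]
      rw [mul_add, ← add_assoc, mul_assoc (w ^ N)]
      congr 2
      exact Finset.sum_congr rfl fun n _ => by ring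
    rw [hfactor, det_mul, det_mul, det_diagonal, Finset.prod_pow_eq_pow_sum]
    ring

theorem norm_det_mul_pow_le {N : ℕ} {z : Fin N → ℂ} (hz : Function.Injective z)
    {f : Fin N → ℂ → ℂ} (hf : ∀ j, Differentiable ℂ (f j)) (E : Matrix (Fin N) (Fin N) ℂ)
    {ρ C : ℝ} (hρ : 1 ≤ ρ)
    (hC : ∀ w : ℂ, ‖w‖ = ρ → ‖(of fun i j => f j (w * z i) + w ^ N * E i j).det‖ ≤ C) :
    ‖(of fun i j => f j (z i) + E i j).det‖ * ρ ^ (∑ n : Fin N, (n : ℕ)) ≤ C := by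
  obtain ⟨G, hG, hdet⟩ := exists_det_eq_mul_pow hz hf E
  have hρ0 : 0 < ρ := one_pos.trans_le hρ
  have hmax : ‖G 1‖ ≤ C / ρ ^ (∑ n : Fin N, (n : ℕ)) := by
    refine Complex.norm_le_of_forall_mem_frontier_norm_le (Metric.isBounded_ball (x := 0) (r := ρ))
      hG.diffContOnCl (fun w hw => ?_) ?_
    · rw [frontier_ball _ hρ0.ne', mem_sphere_zero_iff_norm] at hw
      rw [le_div_iff₀ (by positivity), ← hw, ← norm_pow, ← norm_mul, ← hdet]
      exact hC w hw
    · rw [closure_ball _ hρ0.ne']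
      simpa using hρ
  have hdet_one := hdet 1
  simp only [one_mul, one_pow, mul_one] at hdet_one
  rwa [hdet_one, ← le_div_iff₀ (by positivity)]

theorem norm_det_le_factorial_mul_prod {ι : Type*} [Fintype ι] [DecidableEq ι]
    (A : Matrix ι ι ℂ) (b : ι → ℝ) (h : ∀ i j, ‖A i j‖ ≤ b j) :
    ‖A.det‖ ≤ (Fintype.card ι).factorial * ∏ j, b j := by
  rw [det_apply, ← Fintype.card_perm, ← nsmul_eq_mul]
  refine (norm_sum_le _ _).trans (Finset.sum_le_card_nsmul _ _ _ fun σ _ => ?_)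
  have hsign : ‖Equiv.Perm.sign σ • ∏ i, A (σ i) i‖ = ‖∏ i, A (σ i) i‖ := by
    rcases Int.units_eq_one_or (Equiv.Perm.sign σ) with hs | hs <;> simp [hs]
  rw [hsign, norm_prod]
  exact Finset.prod_le_prod (fun _ _ => norm_nonneg _) fun i _ => h _ _

theorem norm_det_mul_pow_le_factorial_mul_prod {ι : Type*} [Fintype ι] [DecidableEq ι] {z : ι → ℂ}
    (hz : Function.Injective z) {f : ι → ℂ → ℂ} (hf : ∀ j, Differentiable ℂ (f j))
    (E : Matrix ι ι ℂ) {ρ : ℝ} (hρ : 1 ≤ ρ) {b : ι → ℝ}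
    (hb : ∀ w : ℂ, ‖w‖ = ρ → ∀ i j, ‖f j (w * z i) + w ^ Fintype.card ι * E i j‖ ≤ b j) :
    ‖(of fun i j => f j (z i) + E i j).det‖ *
        ρ ^ (Fintype.card ι * (Fintype.card ι - 1) / 2) ≤
      (Fintype.card ι).factorial * ∏ j, b j := by
  let e := Fintype.equivFin ι
  rw [← Finset.sum_range_id, Finset.sum_range, ← det_submatrix_equiv_self e.symm]
  refine norm_det_mul_pow_le (hz.comp e.symm.injective) (f := f ∘ e.symm) (fun j => hf _)
    (E.submatrix e.symm e.symm) hρ fun w hw => ?_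
  refine (norm_det_le_factorial_mul_prod _ (b ∘ e.symm) fun i j => hb w hw _ _).trans_eq ?_
  rw [Fintype.card_fin, ← e.symm.prod_comp b]
  rfl

theorem abs_pow_sub_pow_le_mul {x y Y δ K : ℝ} {k : ℕ} (hY : 1 ≤ Y) (hx : |x| ≤ Y) (hy : |y| ≤ Y)
    (hxy : |x - y| ≤ δ) (hk : k ≤ K) : |x ^ k - y ^ k| ≤ δ * K * Y ^ k := by
  have hδ : 0 ≤ δ := (abs_nonneg _).trans hxy
  have hK : 0 ≤ K := k.cast_nonneg.trans hk
  have hmax : max |x| |y| ^ (k - 1) ≤ Y ^ k :=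
    (pow_le_pow_left₀ (by positivity) (max_le hx hy) _).trans
      (pow_le_pow_right₀ hY (Nat.sub_le k 1))
  calc |x ^ k - y ^ k| ≤ |x - y| * k * max |x| |y| ^ (k - 1) := abs_pow_sub_pow_le _ _ _
    _ ≤ δ * K * Y ^ k := by gcongr

theorem mul_norm_pow_sub_pow_mul_exp_le {c x y θ Y δ K : ℝ} {k : ℕ} (hc : 0 ≤ c) (hY : 1 ≤ Y)
    (hx : |x| ≤ Y) (hy : |y| ≤ Y) (hxy : |x - y| ≤ δ) (hk : k ≤ K) (hδ : c * (δ * K) ≤ 1) :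
    c * ‖((x ^ k - y ^ k : ℝ) : ℂ) * Complex.exp (θ * Complex.I)‖ ≤ Y ^ k := by
  rw [norm_mul, Complex.norm_exp_ofReal_mul_I, mul_one, Complex.norm_real, Real.norm_eq_abs]
  calc c * |x ^ k - y ^ k| ≤ c * (δ * K * Y ^ k) := by
        gcongr
        exact abs_pow_sub_pow_le_mul hY hx hy hxy hk
    _ = c * (δ * K) * Y ^ k := by ring
    _ ≤ Y ^ k := mul_le_of_le_one_left (by positivity) hδ

theorem norm_mul_pow_mul_exp_le {κ t z Y Z : ℝ} (hκ : 0 ≤ κ) (hz : |z| ≤ Z) {w : ℂ}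
    (hY : ‖w‖ * κ * Z ≤ Y) (k : ℕ) :
    ‖(κ * (w * z)) ^ k * Complex.exp (t * (w * z) * Complex.I)‖ ≤
      Y ^ k * Real.exp (‖w‖ * |t| * Z) := by
  have hpow : ‖(κ * (w * z) : ℂ)‖ ≤ Y := by
    calc ‖(κ * (w * z) : ℂ)‖ = ‖w‖ * κ * |z| := by
          simp only [norm_mul, Complex.norm_real, Real.norm_eq_abs, abs_of_nonneg hκ]
          ring
      _ ≤ ‖w‖ * κ * Z := by gcongr
      _ ≤ Y := hY
  have hexp : (t * (w * z) * Complex.I).re ≤ ‖w‖ * |t| * Z := by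
    calc (t * (w * z) * Complex.I).re ≤ ‖t * (w * z) * Complex.I‖ := Complex.re_le_norm _
      _ = ‖w‖ * |t| * |z| := by
          simp only [norm_mul, Complex.norm_real, Real.norm_eq_abs, Complex.norm_I]
          ring
      _ ≤ ‖w‖ * |t| * Z := by gcongr
  rw [norm_mul, norm_pow, Complex.norm_exp]
  exact mul_le_mul (pow_le_pow_left₀ (norm_nonneg _) hpow k) (Real.exp_le_exp.mpr hexp)
    (Real.exp_pos _).le (pow_nonneg ((norm_nonneg _).trans hpow) k)

/- The Schwarz lemma applies to the functions `(κ * ζ) ^ k j * exp (t j * ζ * I)`, with the passage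
from `κ * z i` to the nearby number `x i` as perturbation. -/
theorem norm_det_pow_mul_exp_le {ι : Type*} [Fintype ι] [DecidableEq ι] {k : ι → ℕ}
    {t z x : ι → ℝ} {κ ρ Y Z δ K : ℝ} (hinj : Function.Injective z) (hκ : 0 ≤ κ) (hρ : 1 ≤ ρ)
    (hY : 1 ≤ Y) (hz : ∀ i, |z i| ≤ Z) (hκZ : ρ * κ * Z ≤ Y) (hx : ∀ i, |x i| ≤ Y)
    (hxz : ∀ i, |x i - κ * z i| ≤ δ) (hk : ∀ j, k j ≤ K)
    (hδ : ρ ^ Fintype.card ι * (δ * K) ≤ 1) :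
    ‖(of fun i j => (x i : ℂ) ^ k j * Complex.exp (t j * z i * Complex.I)).det‖ *
        ρ ^ (Fintype.card ι * (Fintype.card ι - 1) / 2) ≤
      (Fintype.card ι).factorial * ∏ j, (2 * Y ^ k j * Real.exp (ρ * |t j| * Z)) := by
  let f (j : ι) (ζ : ℂ) : ℂ := (κ * ζ) ^ k j * Complex.exp (t j * ζ * Complex.I)
  let E : Matrix ι ι ℂ := of fun i j =>
    (x i ^ k j - (κ * z i) ^ k j : ℝ) * Complex.exp ((t j * z i : ℝ) * Complex.I)
  have hsplit : (of fun i j => (x i : ℂ) ^ k j * Complex.exp (t j * z i * Complex.I)) =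
      of fun i j => f j (z i) + E i j := by
    ext i j
    simp only [of_apply, f, E]
    push_cast
    ring
  have hZ (i) : 0 ≤ Z := (abs_nonneg _).trans (hz i)
  have hκz (i) : |κ * z i| ≤ Y := by
    calc |κ * z i| = 1 * κ * |z i| := by rw [abs_mul, abs_of_nonneg hκ, one_mul]
      _ ≤ ρ * κ * Z := by have := hZ i; gcongr; exact hz i
      _ ≤ Y := hκZ
  have hE (i j) : ρ ^ Fintype.card ι * ‖E i j‖ ≤ Y ^ k j :=
    mul_norm_pow_sub_pow_mul_exp_le (by positivity) hY (hx i) (hκz i) (hxz i) (hk j) hδ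
  rw [hsplit]
  refine norm_det_mul_pow_le_factorial_mul_prod (z := fun i => (z i : ℂ))
    (Complex.ofReal_injective.comp hinj) (fun j => by simp only [f]; fun_prop) E hρ
    fun w hw i j => (norm_add_le _ _).trans ?_
  have hf : ‖f j (w * z i)‖ ≤ Y ^ k j * Real.exp (ρ * |t j| * Z) := by
    rw [← hw] at hκZ ⊢
    exact norm_mul_pow_mul_exp_le hκ (hz i) hκZ _
  have hexp : 1 ≤ Real.exp (ρ * |t j| * Z) := Real.one_le_exp (by have := hZ i; positivity)
  have hYk : 0 ≤ Y ^ k j := by positivity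
  rw [norm_mul (w ^ _), norm_pow, hw]
  nlinarith [hE i j]

end InterpolationDeterminant

section ExponentialPolynomial

open Matrix Polynomial

/-- The interpolation matrix of the functions `X ^ k j * exp (2 * t j * θ * I)` of two variables
`X` and `θ`, evaluated at the points `X = x i`, `θ = r i * ψ`. -/
noncomputable def expPolyMatrix {ι κ : Type*} (ψ : ℝ) (x : ι → ℤ) (r : ι → ℕ) (k : κ → ℕ)
    (t : κ → ℤ) : Matrix ι κ ℂ :=
  of fun i j => (x i : ℂ) ^ k j * Complex.exp (2 * t j * (r i * ψ) * Complex.I)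

theorem exp_nine_mul_pi_le : Real.exp (9 * Real.pi) ≤ 2 ^ 41 := by
  rw [← Real.log_le_log_iff (Real.exp_pos _) (by positivity), Real.log_exp, Real.log_pow]
  push_cast
  linarith [Real.pi_lt_d4, Real.log_two_gt_d9]

theorem exp_nine_mul_abs_mul_le (t : ℤ) (B : ℕ) :
    Real.exp (9 * |2 * (t : ℝ)| * (Real.pi * B / 2)) ≤ 2 ^ (41 * B * t.natAbs) := by
  calc Real.exp (9 * |2 * (t : ℝ)| * (Real.pi * B / 2))
      = Real.exp (9 * Real.pi) ^ (B * t.natAbs) := by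
        rw [← Real.exp_nat_mul, abs_mul, abs_two, Nat.cast_mul, Nat.cast_natAbs, Int.cast_abs]
        ring_nf
    _ ≤ (2 ^ 41) ^ (B * t.natAbs) := by gcongr; exact exp_nine_mul_pi_le
    _ = 2 ^ (41 * B * t.natAbs) := by rw [← pow_mul, mul_assoc]

theorem abs_mul_add_mul_pi_le {R S r : ℕ} {s : ℤ} {ψ : ℝ} (hψ : |ψ| ≤ Real.pi / 2) (hr : r ≤ R)
    (hs : |s| ≤ S) : |r * ψ + s * Real.pi| ≤ Real.pi * (R + 2 * S : ℕ) / 2 := by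
  have hs' : |(s : ℝ)| ≤ S := by exact_mod_cast hs
  calc |r * ψ + s * Real.pi| ≤ r * |ψ| + |(s : ℝ)| * Real.pi := by
        refine (abs_add_le _ _).trans_eq ?_
        rw [abs_mul, abs_mul, Nat.abs_cast, abs_of_pos Real.pi_pos]
    _ ≤ R * (Real.pi / 2) + S * Real.pi := by gcongr
    _ = Real.pi * (R + 2 * S : ℕ) / 2 := by push_cast; ring

theorem exp_two_mul_add_int_mul_pi (t s : ℤ) (θ : ℂ) :
    Complex.exp (2 * t * (θ + s * Real.pi) * Complex.I) =
      Complex.exp (2 * t * θ * Complex.I) := by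
  refine Complex.exp_eq_exp_iff_exists_int.mpr ⟨t * s, ?_⟩
  push_cast
  ring

theorem expPolyMatrix_apply_mul_add {ι κ : Type*} (ψ : ℝ) (x s : ι → ℤ) (r : ι → ℕ) (k : κ → ℕ)
    (t : κ → ℤ) (i : ι) (j : κ) :
    expPolyMatrix ψ x r k t i j = (x i : ℂ) ^ k j *
      Complex.exp ((2 * t j : ℝ) * (r i * ψ + s i * Real.pi : ℝ) * Complex.I) := by
  push_cast
  rw [exp_two_mul_add_int_mul_pi, expPolyMatrix, of_apply]

theorem abs_le_two_mul_of_abs_add_mul_le {x η : ℝ} {r R ℓ m : ℕ} (hη : |η| ≤ 1) (hr : r ≤ R)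
    (hRm : R ≤ ℓ * m) (h : |x + r * η| ≤ ℓ * m) : |x| ≤ 2 * (ℓ * m) := by
  have hrη : |r * η| ≤ ℓ * m := by
    calc |r * η| = r * |η| := by rw [abs_mul, Nat.abs_cast]
      _ ≤ R * 1 := by gcongr
      _ ≤ ℓ * m := by rw [mul_one]; exact_mod_cast hRm
  have := abs_sub (x + r * η) (r * η)
  rw [add_sub_cancel_right] at this
  linarith

theorem norm_det_expPolyMatrix_le {ι : Type*} [Fintype ι] [DecidableEq ι] {R S ℓ K : ℕ} {M : ℤ}
    {ψ η Y : ℝ} {r k : ι → ℕ} {s : ι → ℤ} (hψ : |ψ| ≤ Real.pi / 2)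
    (hM : 2 * ℓ * ψ = Real.pi * (M + η)) (hη : |η| ≤ 1) (hℓ : 0 < ℓ) (hr : ∀ i, r i ≤ R)
    (hs : ∀ i, |s i| ≤ S) (hinj : Function.Injective fun i => r i * ψ + s i * Real.pi)
    (hY : 1 ≤ Y) (hYb : 9 * (ℓ * (R + 2 * S : ℕ)) ≤ Y) (hk : ∀ j, k j ≤ K)
    (hK : (9 : ℝ) ^ Fintype.card ι * (R * |η| * K) ≤ 1) (t : ι → ℤ) :
    ‖(expPolyMatrix ψ (fun i => M * r i + 2 * ℓ * s i) r k t).det‖ *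
        9 ^ (Fintype.card ι * (Fintype.card ι - 1) / 2) ≤
      (Fintype.card ι).factorial *
        ∏ j, (2 * Y ^ k j * 2 ^ (41 * (R + 2 * S) * (t j).natAbs)) := by
  let z (i : ι) : ℝ := r i * ψ + s i * Real.pi
  let x (i : ι) : ℝ := M * r i + 2 * ℓ * s i
  have hκz (i) : 2 * ℓ / Real.pi * z i = x i + r i * η := by
    simp only [z, x]
    field_simp
    linear_combination (r i : ℝ) * hM
  have hz (i) : |z i| ≤ Real.pi * (R + 2 * S : ℕ) / 2 := abs_mul_add_mul_pi_le hψ (hr i) (hs i)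
  have hrη (i) : |r i * η| ≤ R * |η| := by
    rw [abs_mul, Nat.abs_cast]
    gcongr
    exact hr i
  have hκZ : 2 * ℓ / Real.pi * (Real.pi * (R + 2 * S : ℕ) / 2) = ℓ * (R + 2 * S : ℕ) := by
    field_simp
  have hx (i) : |x i| ≤ Y := by
    have hκz' : |x i + r i * η| ≤ ℓ * (R + 2 * S : ℕ) := by
      rw [← hκz, abs_mul, abs_of_nonneg (by positivity), ← hκZ]
      gcongr
      exact hz i
    have hR : R ≤ ℓ * (R + 2 * S) := (Nat.le_add_right R _).trans (Nat.le_mul_of_pos_left _ hℓ)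
    linarith [abs_le_two_mul_of_abs_add_mul_le hη (hr i) hR hκz', abs_nonneg (x i)]
  have hperiod : expPolyMatrix ψ (fun i => M * r i + 2 * ℓ * s i) r k t =
      of fun i j => (x i : ℂ) ^ k j * Complex.exp ((2 * t j : ℝ) * z i * Complex.I) := by
    ext i j
    rw [expPolyMatrix_apply_mul_add (s := s), of_apply]
    simp only [x, z]
    push_cast
    rfl
  rw [hperiod]
  refine (norm_det_pow_mul_exp_le (κ := 2 * ℓ / Real.pi) (δ := R * |η|) hinj (by positivity)
    (by norm_num) hY hz (by rwa [mul_assoc, hκZ]) hx (fun i => ?_)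
    (fun j => by exact_mod_cast hk j) hK).trans ?_
  · rw [hκz, sub_add_cancel_left, abs_neg]
    exact hrη i
  · gcongr with j
    exact exp_nine_mul_abs_mul_le _ _

theorem eq_zero_of_mul_eq_two_mul_mul {ℓ : ℕ} {M k n : ℤ} (hℓ : ℓ.Prime) (hMℓ : ¬ (ℓ : ℤ) ∣ M)
    (hk : |k| < ℓ) (h : k * M = 2 * ℓ * n) : k = 0 := by
  have hdvd : (ℓ : ℤ) ∣ k * M := ⟨2 * n, by linear_combination h⟩
  exact Int.eq_zero_of_abs_lt_dvd
    (((Nat.prime_iff_prime_int.mp hℓ).dvd_or_dvd hdvd).resolve_right hMℓ) hk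

theorem eq_zero_of_mul_eq_int_mul_pi {ℓ : ℕ} {M k n : ℤ} {ψ η : ℝ} (hℓ : ℓ.Prime)
    (hMℓ : ¬ (ℓ : ℤ) ∣ M) (hM : 2 * ℓ * ψ = Real.pi * (M + η)) (hk : |k| < ℓ)
    (hkη : |(k : ℝ)| * |η| < 1) (h : k * ψ = n * Real.pi) : k = 0 := by
  have hη : ((k * M - 2 * ℓ * n : ℤ) : ℝ) = -(k * η) := by
    apply mul_left_cancel₀ Real.pi_ne_zero
    push_cast
    linear_combination 2 * ℓ * h - k * hM
  have habs : |k * M - 2 * ℓ * n| < 1 := by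
    rw [← Int.cast_lt (R := ℝ), Int.cast_abs, hη, abs_neg, abs_mul, Int.cast_one]
    exact hkη
  exact eq_zero_of_mul_eq_two_mul_mul hℓ hMℓ hk (sub_eq_zero.mp (Int.abs_lt_one_iff.mp habs))

theorem injective_mul_add_two_mul_mul {R S ℓ : ℕ} {M : ℤ} (hℓ : ℓ.Prime) (hMℓ : ¬ (ℓ : ℤ) ∣ M)
    (hR : R ≤ ℓ) (a : ℤ) :
    Function.Injective fun t : Fin R × Fin S => M * (t.1 : ℕ) + 2 * ℓ * ((t.2 : ℕ) - a) := by
  intro t t' h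
  have h1 := eq_zero_of_mul_eq_two_mul_mul (k := (t.1 : ℕ) - (t'.1 : ℕ))
    (n := (t'.2 : ℕ) - (t.2 : ℕ)) hℓ hMℓ (by rw [abs_lt]; omega) (by linear_combination h)
  have h1' : ((t.1 : ℕ) : ℤ) = (t'.1 : ℕ) := sub_eq_zero.mp h1
  have h2 : ((t.2 : ℕ) : ℤ) - a = (t'.2 : ℕ) - a := by
    refine mul_left_cancel₀ (a := (2 * ℓ : ℤ)) (by have := hℓ.pos; positivity) ?_
    linear_combination h - M * h1'
  exact Prod.ext (Fin.ext (by exact_mod_cast h1')) (Fin.ext (by omega))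

theorem injective_mul_add_mul_pi {R S ℓ : ℕ} {M : ℤ} {ψ η : ℝ} (hℓ : ℓ.Prime)
    (hMℓ : ¬ (ℓ : ℤ) ∣ M) (hM : 2 * ℓ * ψ = Real.pi * (M + η)) (hR : R ≤ ℓ)
    (hη : R * |η| < 1) (a : ℤ) :
    Function.Injective fun t : Fin R × Fin S =>
      (t.1 : ℕ) * ψ + ((t.2 : ℕ) - a : ℤ) * Real.pi := by
  intro t t' h
  have hk : |((t.1 : ℕ) : ℤ) - (t'.1 : ℕ)| ≤ R := by rw [abs_le]; omega
  have h1 := eq_zero_of_mul_eq_int_mul_pi (k := (t.1 : ℕ) - (t'.1 : ℕ))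
    (n := (t'.2 : ℕ) - (t.2 : ℕ)) hℓ hMℓ hM (by rw [abs_lt]; omega)
    (lt_of_le_of_lt (by gcongr; exact_mod_cast hk) hη)
    (by push_cast at h ⊢; linear_combination h)
  have h1' : (t.1 : ℕ) = (t'.1 : ℕ) := by omega
  simp only [h1'] at h
  have h2 := mul_right_cancel₀ Real.pi_ne_zero (add_left_cancel h)
  exact Prod.ext (Fin.ext h1') (Fin.ext (by have := Int.cast_injective h2; omega))

theorem injective_exp_two_mul_mul {L ℓ : ℕ} {M : ℤ} {ψ η : ℝ} (hℓ : ℓ.Prime)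
    (hMℓ : ¬ (ℓ : ℤ) ∣ M) (hM : 2 * ℓ * ψ = Real.pi * (M + η)) (hL : L ≤ ℓ)
    (hη : L * |η| < 1) (a : ℤ) :
    Function.Injective fun l : Fin L =>
      Complex.exp (2 * ((l : ℕ) - a : ℤ) * ψ * Complex.I) := by
  intro l l' h
  obtain ⟨n, hn⟩ := Complex.exp_eq_exp_iff_exists_int.mp h
  have hψ : (((l : ℕ) : ℤ) - (l' : ℕ) : ℤ) * ψ = n * Real.pi := by
    have h2I : (2 * Complex.I : ℂ) ≠ 0 := by simp
    suffices h : ((((l : ℕ) : ℤ) - (l' : ℕ) : ℤ) * ψ : ℂ) = n * Real.pi by exact_mod_cast h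
    refine mul_left_cancel₀ h2I ?_
    push_cast at hn ⊢
    linear_combination hn
  have hk : |((l : ℕ) : ℤ) - (l' : ℕ)| ≤ L := by rw [abs_le]; omega
  have h0 := eq_zero_of_mul_eq_int_mul_pi hℓ hMℓ hM (by rw [abs_lt]; omega)
    (lt_of_le_of_lt (by gcongr; exact_mod_cast hk) hη) hψ
  exact Fin.ext (by omega)

theorem injective_mulVec_expPolyMatrix {K L R S ℓ : ℕ} {M : ℤ} {ψ η : ℝ} (hℓ : ℓ.Prime)
    (hMℓ : ¬ (ℓ : ℤ) ∣ M) (hM : 2 * ℓ * ψ = Real.pi * (M + η)) (hR : L + R ≤ ℓ)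
    (hη : (L + R : ℕ) * |η| < 1) (hLK : L * K < R * S + L) (a b : ℤ) :
    Function.Injective (expPolyMatrix ψ
      (fun i : Fin (L + R) × Fin S => M * (i.1 : ℕ) + 2 * ℓ * ((i.2 : ℕ) - a)) (fun i => i.1)
      (fun j : Fin K × Fin L => j.1) fun j => (j.2 : ℕ) - b).mulVec := by
  refine (injective_iff_map_eq_zero (Matrix.mulVecLin _)).mpr fun v hv => ?_
  let p (l : Fin L) : degreeLT ℂ K := (degreeLTEquiv ℂ K).symm fun k => v (k, l)
  have hp : (fun l => (p l : ℂ[X])) = 0 := by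
    refine eq_zero_of_sum_pow_mul_eval_eq_zero (K := K) (R := R) (M := (M : ℂ))
      (c := fun s : Fin S => 2 * ℓ * ((s : ℕ) - a : ℂ))
      (injective_exp_two_mul_mul hℓ hMℓ hM (by omega) (lt_of_le_of_lt (by gcongr; omega) hη) b)
      (fun l => Complex.exp_ne_zero _) (fun l => ?_) (fun t t' h => ?_) hLK fun r hr s => ?_
    · exact mem_degreeLT.mp (p l).2
    · refine injective_mul_add_two_mul_mul hℓ hMℓ (by omega) a (Int.cast_injective (α := ℂ) ?_)
      push_cast
      exact h
    · rw [← show _ = (0 : ℂ) from congrFun hv (⟨r, hr⟩, s)]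
      simp only [eval_eq_sum_degreeLTEquiv (p _).2, Finset.mul_sum, mulVecLin_apply, mulVec,
        dotProduct, Fintype.sum_prod_type_right]
      refine Finset.sum_congr rfl fun l _ => Finset.sum_congr rfl fun k _ => ?_
      have hexp : Complex.exp (2 * ((l : ℕ) - b : ℤ) * ψ * Complex.I) ^ r =
          Complex.exp (2 * ((l : ℕ) - b : ℤ) * (r * ψ) * Complex.I) := by
        rw [← Complex.exp_nat_mul]
        ring_nf
      simp only [p, LinearEquiv.apply_symm_apply, Subtype.coe_eta, expPolyMatrix, of_apply, hexp]
      push_cast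
      ring
  ext ⟨k, l⟩
  have hpl : p l = 0 := Subtype.ext (congrFun hp l)
  simpa [p] using congrFun ((degreeLTEquiv ℂ K).symm.map_eq_zero_iff.mp hpl) k

theorem exists_expPolyMatrix_det_ne_zero {K L R S ℓ : ℕ} {M : ℤ} {ψ η : ℝ} (hℓ : ℓ.Prime)
    (hMℓ : ¬ (ℓ : ℤ) ∣ M) (hM : 2 * ℓ * ψ = Real.pi * (M + η)) (hR : L + R ≤ ℓ)
    (hη : (L + R : ℕ) * |η| < 1) (hLK : L * K < R * (2 * S + 1) + L) (b : ℤ) :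
    ∃ (r : Fin K × Fin L → ℕ) (s : Fin K × Fin L → ℤ), (∀ i, r i ≤ L + R) ∧ (∀ i, |s i| ≤ S) ∧
      (Function.Injective fun i => r i * ψ + s i * Real.pi) ∧
      (expPolyMatrix ψ (fun i => M * r i + 2 * ℓ * s i) r (fun j => j.1)
        fun j => (j.2 : ℕ) - b).det ≠ 0 := by
  obtain ⟨f, hf⟩ := exists_det_submatrix_ne_zero
    (injective_mulVec_expPolyMatrix hℓ hMℓ hM hR hη hLK S b)
  have hfinj : Function.Injective f := fun i j hij => by
    by_contra hne
    exact hf (det_zero_of_row_eq hne (by ext; simp [hij]))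
  exact ⟨fun i => (f i).1, fun i => (f i).2 - S, fun i => (f i).1.2.le,
    fun i => by dsimp only; rw [abs_le]; omega,
    (injective_mul_add_mul_pi hℓ hMℓ hM hR hη S).comp hfinj, hf⟩

theorem pow_mul_conj_pow_eq (z : ℂ) {m n T : ℕ} {t : ℤ} (hm : (m : ℤ) = T + t)
    (hn : (n : ℤ) = T - t) :
    z ^ m * starRingEnd ℂ z ^ n =
      Complex.normSq z ^ T * Complex.exp (2 * t * z.arg * Complex.I) := by
  have hz : z ^ m = ‖z‖ ^ m * Complex.exp (m * (z.arg * Complex.I)) := by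
    rw [Complex.exp_nat_mul, ← mul_pow, Complex.norm_mul_exp_arg_mul_I]
  have hconj : starRingEnd ℂ z ^ n = ‖z‖ ^ n * Complex.exp (n * -(z.arg * Complex.I)) := by
    conv_lhs => rw [← Complex.norm_mul_exp_arg_mul_I z, map_mul, Complex.conj_ofReal,
      ← Complex.exp_conj, map_mul, Complex.conj_ofReal, Complex.conj_I, mul_neg]
    rw [Complex.exp_nat_mul, ← mul_pow]
  have hmn : m + n = 2 * T := by omega
  have hexp : Complex.exp (2 * t * z.arg * Complex.I) =
      Complex.exp (m * (z.arg * Complex.I)) * Complex.exp (n * -(z.arg * Complex.I)) := by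
    rw [← Complex.exp_add, ← Int.cast_natCast m, ← Int.cast_natCast n, hm, hn]
    push_cast
    ring_nf
  rw [hz, hconj, hexp, Complex.normSq_eq_norm_sq, Complex.ofReal_pow, ← pow_mul, ← hmn, pow_add]
  ring

theorem sqrt_neg_mul_I_mul_self {d : ℤ} (hd : d < 0) :
    (Real.sqrt (-d) * Complex.I) * (Real.sqrt (-d) * Complex.I) = ((d : ℤ) : ℂ) := by
  have hd' : (0 : ℝ) ≤ -d := by exact_mod_cast (neg_pos.mpr hd).le
  rw [mul_mul_mul_comm, Complex.I_mul_I, ← Complex.ofReal_mul, Real.mul_self_sqrt hd']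
  push_cast
  ring

/-- The embedding of an imaginary quadratic ring `ℤ√d` into `ℂ` that sends `√d` into the upper
half-plane. -/
noncomputable def zsqrtdToComplex {d : ℤ} (hd : d < 0) : ℤ√d →+* ℂ :=
  Zsqrtd.lift ⟨Real.sqrt (-d) * Complex.I, sqrt_neg_mul_I_mul_self hd⟩

theorem zsqrtdToComplex_re {d : ℤ} (hd : d < 0) (α : ℤ√d) :
    (zsqrtdToComplex hd α).re = α.re := by
  simp [zsqrtdToComplex, Zsqrtd.lift]

theorem zsqrtdToComplex_star {d : ℤ} (hd : d < 0) (α : ℤ√d) :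
    zsqrtdToComplex hd (star α) = starRingEnd ℂ (zsqrtdToComplex hd α) := by
  apply Complex.ext <;> simp [zsqrtdToComplex, Zsqrtd.lift]

theorem normSq_zsqrtdToComplex {d : ℤ} (hd : d < 0) (α : ℤ√d) :
    Complex.normSq (zsqrtdToComplex hd α) = α.norm := by
  apply Complex.ofReal_injective
  rw [← Complex.mul_conj, ← zsqrtdToComplex_star, ← map_mul, ← Zsqrtd.norm_eq_mul_conj,
    map_intCast, Complex.ofReal_intCast]

theorem one_le_norm_zsqrtdToComplex {d : ℤ} (hd : d < 0) {α : ℤ√d}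
    (hα : zsqrtdToComplex hd α ≠ 0) : 1 ≤ ‖zsqrtdToComplex hd α‖ := by
  have hpos : 0 < α.norm := by
    rw [← Complex.normSq_pos, normSq_zsqrtdToComplex] at hα
    exact_mod_cast hα
  rw [← one_le_sq_iff₀ (norm_nonneg _), ← Complex.normSq_eq_norm_sq, normSq_zsqrtdToComplex]
  exact_mod_cast hpos

/- Multiplying row `i` by `α.norm ^ (T * r i)` turns the matrix into the image of a matrix over
`ℤ√d`, because `exp (2 * ψ * I) = α / star α` for `ψ` the argument of `α`. -/
theorem one_le_prod_norm_pow_mul_norm_det {ι : Type*} [Fintype ι] [DecidableEq ι] {d : ℤ}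
    (hd : d < 0) {α : ℤ√d} (hα : α ≠ 0) {T : ℕ} {x t : ι → ℤ} {r k : ι → ℕ}
    (ht : ∀ j, |t j| ≤ T)
    (h : (expPolyMatrix (zsqrtdToComplex hd α).arg x r k t).det ≠ 0) :
    1 ≤ (∏ i, (α.norm : ℝ) ^ (T * r i)) *
      ‖(expPolyMatrix (zsqrtdToComplex hd α).arg x r k t).det‖ := by
  let B : Matrix ι ι (ℤ√d) := of fun i j => (x i : ℤ√d) ^ k j *
    (α ^ (T + t j).toNat * star α ^ (T - t j).toNat) ^ r i
  have hB : zsqrtdToComplex hd B.det = (∏ i, ((α.norm ^ (T * r i) : ℝ) : ℂ)) *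
      (expPolyMatrix (zsqrtdToComplex hd α).arg x r k t).det := by
    rw [RingHom.map_det, ← det_mul_column]
    congr 1
    ext i j
    have htj := abs_le.mp (ht j)
    simp only [B, RingHom.mapMatrix_apply, map_apply, of_apply, map_mul, map_pow, map_intCast,
      zsqrtdToComplex_star, expPolyMatrix]
    rw [pow_mul_conj_pow_eq (T := T) (t := t j) _ (by omega) (by omega), mul_pow,
      ← Complex.exp_nat_mul, normSq_zsqrtdToComplex, ← pow_mul]
    push_cast
    ring_nf
  have hnorm : (α.norm : ℝ) ≠ 0 := by
    exact_mod_cast (Zsqrtd.norm_eq_zero_iff hd α).not.mpr hα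
  have hone := one_le_norm_zsqrtdToComplex hd (α := B.det) <| by
    rw [hB]
    exact mul_ne_zero (Finset.prod_ne_zero_iff.mpr fun i _ =>
      Complex.ofReal_ne_zero.mpr (pow_ne_zero _ hnorm)) h
  have hnonneg : (0 : ℝ) ≤ α.norm := by exact_mod_cast Zsqrtd.norm_nonneg hd.le α
  rwa [hB, norm_mul, norm_prod, Finset.prod_congr rfl fun i _ =>
    (Complex.norm_of_nonneg (pow_nonneg hnonneg (T * r i)))] at hone

end ExponentialPolynomial

section Angle

theorem exists_odd_abs_le_abs_cos (y : ℝ) :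
    ∃ (M : ℤ) (η : ℝ), Odd M ∧ |η| ≤ |Real.cos y| ∧ 2 * y = Real.pi * (M + η) := by
  have hπ := Real.pi_pos
  let m := ⌊y / Real.pi⌋
  let η := 2 * (y / Real.pi) - (2 * m + 1)
  have hy : y = Real.pi * η / 2 + Real.pi / 2 + m * Real.pi := by
    simp only [η]
    field_simp
    ring
  have hη : |Real.pi * η / 2| ≤ Real.pi / 2 := by
    have hle := Int.floor_le (y / Real.pi)
    have hlt := Int.lt_floor_add_one (y / Real.pi)
    have : |η| ≤ 1 := abs_le.mpr ⟨by simp only [η]; linarith, by simp only [η]; linarith⟩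
    rw [abs_div, abs_mul, abs_of_pos hπ, abs_two]
    nlinarith
  refine ⟨2 * m + 1, η, ⟨m, rfl⟩, ?_, by push_cast; linarith⟩
  have hcos : |Real.cos y| = |Real.sin (Real.pi * η / 2)| := by
    rw [hy, Real.cos_add_int_mul_pi, Real.cos_add_pi_div_two, abs_mul, abs_zpow, abs_neg, abs_neg,
      abs_one, one_zpow, one_mul]
  rw [hcos]
  refine le_trans (le_of_eq ?_) (Real.mul_abs_le_abs_sin hη)
  rw [abs_div, abs_mul, abs_of_pos hπ, abs_two]
  field_simp

theorem abs_cos_le_of_dvd {ℓ : ℕ} {M : ℤ} {ψ η : ℝ} (hψ : |ψ| ≤ Real.pi / 2) (hℓ : 3 ≤ ℓ)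
    (hM : 2 * ℓ * ψ = Real.pi * (M + η)) (hη : |η| ≤ 1) (hM0 : M ≠ 0) (hdvd : (ℓ : ℤ) ∣ M) :
    |Real.cos ψ| ≤ |η| := by
  obtain ⟨k, rfl⟩ := hdvd
  have hπ := Real.pi_pos
  have hℓ' : (3 : ℝ) ≤ ℓ := by exact_mod_cast hℓ
  have hψk : ψ = Real.pi * η / (2 * ℓ) + k * (Real.pi / 2) := by
    push_cast at hM
    field_simp
    linarith
  have hδ : |Real.pi * η / (2 * ℓ)| ≤ Real.pi / (2 * ℓ) * |η| := by
    rw [abs_div, abs_mul, abs_of_pos hπ, abs_of_pos (by linarith : (0 : ℝ) < 2 * ℓ)]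
    exact (div_mul_eq_mul_div _ _ _).ge
  have hδ' : Real.pi / (2 * ℓ) < Real.pi / 2 := by gcongr; linarith
  have hk : |k| < 2 := by
    have h : |k * (Real.pi / 2)| < 2 * (Real.pi / 2) := by
      have := abs_sub ψ (Real.pi * η / (2 * ℓ))
      rw [hψk, add_sub_cancel_left, ← hψk] at this
      linarith [mul_le_of_le_one_right (by positivity : 0 ≤ Real.pi / (2 * ℓ)) hη]
    rw [abs_mul, abs_of_pos (by positivity : (0 : ℝ) < Real.pi / 2)] at h
    exact_mod_cast lt_of_mul_lt_mul_right h (by positivity)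
  have hcos : |Real.cos ψ| = |Real.sin (Real.pi * η / (2 * ℓ))| := by
    obtain rfl | rfl : k = 1 ∨ k = -1 := by
      have : k ≠ 0 := right_ne_zero_of_mul hM0
      rw [abs_lt] at hk
      omega
    · rw [hψk, Int.cast_one, one_mul, Real.cos_add_pi_div_two, abs_neg]
    · rw [hψk, Int.cast_neg, Int.cast_one, neg_one_mul, ← sub_eq_add_neg, Real.cos_sub_pi_div_two]
  calc |Real.cos ψ| ≤ |Real.pi * η / (2 * ℓ)| := hcos.trans_le Real.abs_sin_le_abs
    _ ≤ Real.pi / (2 * ℓ) * |η| := hδ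
    _ ≤ 1 * |η| := by
      gcongr
      rw [div_le_one (by linarith)]
      linarith [Real.pi_le_four]
    _ = |η| := one_mul _

theorem re_pow_sq_eq (z : ℂ) (n : ℕ) :
    (z ^ n).re ^ 2 = Complex.normSq z ^ n * Real.cos (n * z.arg) ^ 2 := by
  have h : (z ^ n).re = ‖z‖ ^ n * Real.cos (n * z.arg) := by
    conv_lhs => rw [← Complex.norm_mul_exp_arg_mul_I z, mul_pow, ← Complex.exp_nat_mul,
      ← mul_assoc, ← Complex.ofReal_pow, ← Complex.ofReal_natCast, ← Complex.ofReal_mul,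
      Complex.re_ofReal_mul, Complex.exp_ofReal_mul_I_re]
  rw [h, Complex.normSq_eq_norm_sq]
  ring

theorem exists_int_not_dvd_of_re_pow_sq_le {z : ℂ} {ℓ : ℕ} (hre : 1 ≤ z.re)
    (hz : 1 < Complex.normSq z) (hℓ : 3 ≤ ℓ) (hpow : (z ^ ℓ).re ^ 2 ≤ Complex.normSq z) :
    ∃ (M : ℤ) (η : ℝ), ¬ (ℓ : ℤ) ∣ M ∧ |η| ≤ 1 ∧ Complex.normSq z ^ (ℓ - 1) * η ^ 2 ≤ 1 ∧
      2 * ℓ * z.arg = Real.pi * (M + η) := by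
  obtain ⟨M, η, hodd, hcos, hM⟩ := exists_odd_abs_le_abs_cos (ℓ * z.arg)
  rw [← mul_assoc] at hM
  have hη : |η| ≤ 1 := hcos.trans (Real.abs_cos_le_one _)
  have hsmall : Complex.normSq z ^ (ℓ - 1) * η ^ 2 ≤ 1 := by
    refine le_of_mul_le_mul_left ?_ (one_pos.trans hz)
    rw [mul_one, ← mul_assoc, mul_pow_sub_one (by omega)]
    refine le_trans ?_ ((re_pow_sq_eq z ℓ).ge.trans hpow)
    gcongr Complex.normSq z ^ ℓ * ?_
    exact sq_le_sq.mpr hcos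
  refine ⟨M, η, fun hdvd => ?_, hη, hsmall, hM⟩
  have hM0 : M ≠ 0 := by rintro rfl; simp at hodd
  have hψ : |z.arg| ≤ Real.pi / 2 := Complex.abs_arg_le_pi_div_two_iff.mpr (by linarith)
  have hcosψ := abs_cos_le_of_dvd hψ hℓ hM hη hM0 hdvd
  have hge : 1 ≤ Complex.normSq z * η ^ 2 := by
    calc (1 : ℝ) ≤ z.re ^ 2 := one_le_pow₀ hre
      _ = Complex.normSq z * Real.cos z.arg ^ 2 := by simpa using re_pow_sq_eq z 1
      _ ≤ Complex.normSq z * η ^ 2 := by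
        gcongr ?_ * ?_
        exact sq_le_sq.mpr hcosψ
  have hle : Complex.normSq z ^ 2 * η ^ 2 ≤ 1 := by
    refine le_trans ?_ hsmall
    gcongr
    · exact hz.le
    · omega
  nlinarith

theorem abs_mul_two_pow_le_one {a η : ℝ} {b m : ℕ} (ha : 2 ^ (2 * b) ≤ a)
    (h : a ^ m * η ^ 2 ≤ 1) : |η| * 2 ^ (b * m) ≤ 1 := by
  rw [← sq_le_one_iff₀ (by positivity)]
  calc (|η| * 2 ^ (b * m)) ^ 2 = (2 ^ (2 * b)) ^ m * η ^ 2 := by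
        rw [mul_pow, sq_abs]
        ring
    _ ≤ a ^ m * η ^ 2 := by gcongr
    _ ≤ 1 := h

end Angle

section Parameters

theorem cubic_le_two_pow {T : ℕ} (hT : 21 ≤ T) :
    2304 * T ^ 3 + 1152 * T ^ 2 + 4 * T + 30 ≤ 15 * 2 ^ T := by
  induction T, hT using Nat.le_induction with
  | base => norm_num
  | succ T hT ih =>
    have h2 : 21 * T ≤ T ^ 2 := by nlinarith
    have h3 : 21 * T ^ 2 ≤ T ^ 3 := by nlinarith
    rw [pow_succ 2]
    ring_nf at ih ⊢
    omega

theorem quadratic_mul_linear_le_two_pow {T : ℕ} (hT : 21 ≤ T) :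
    31 * (2 * T + 1) * (180 * T ^ 2) ≤ 2 ^ (2 * T) := by
  have hcub := cubic_le_two_pow hT
  have hT3 : 150 * T ^ 3 ≤ 2 ^ T := by omega
  have h2 : 21 * T ≤ T ^ 2 := by nlinarith
  have h3 : 21 * T ^ 2 ≤ T ^ 3 := by nlinarith
  calc 31 * (2 * T + 1) * (180 * T ^ 2) ≤ 150 * T ^ 3 * (150 * T ^ 3) :=
        Nat.mul_le_mul (by omega) (by omega)
    _ ≤ 2 ^ T * 2 ^ T := by gcongr
    _ = 2 ^ (2 * T) := by rw [← pow_add, two_mul]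

theorem nine_pow_mul_le_two_pow {T ℓ : ℕ} (hT : 21 ≤ T) (hℓ : 2 ^ (T - 1) ≤ ℓ) :
    9 ^ (180 * T ^ 2 * (2 * T + 1)) * (31 * (2 * T + 1) * (180 * T ^ 2)) ≤
      2 ^ (15 * (ℓ - 1)) := by
  have hcub := cubic_le_two_pow hT
  have h2T : 2 ^ T = 2 * 2 ^ (T - 1) := (mul_pow_sub_one (by omega) 2).symm
  calc 9 ^ (180 * T ^ 2 * (2 * T + 1)) * (31 * (2 * T + 1) * (180 * T ^ 2))
      ≤ 9 ^ (5 * (36 * T ^ 2 * (2 * T + 1))) * 2 ^ (2 * T) :=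
        Nat.mul_le_mul (by ring_nf; rfl) (quadratic_mul_linear_le_two_pow hT)
    _ ≤ 2 ^ (16 * (36 * T ^ 2 * (2 * T + 1))) * 2 ^ (2 * T) := by
        rw [pow_mul 9, pow_mul 2 16]
        exact Nat.mul_le_mul_right _ (Nat.pow_le_pow_left (by norm_num) _)
    _ ≤ 2 ^ (15 * (ℓ - 1)) := by
        rw [← pow_add]
        refine Nat.pow_le_pow_right two_pos ?_
        ring_nf at hcub h2T ⊢
        omega

theorem nine_mul_mul_le_two_pow {T ℓ : ℕ} (hT : 21 ≤ T) (hℓ : ℓ ≤ 2 ^ T) :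
    9 * (ℓ * (31 * (2 * T + 1) + 2 * (3 * T ^ 2))) ≤ 2 ^ (2 * T - 5) := by
  have hcub := cubic_le_two_pow hT
  have h2 : 21 * T ≤ T ^ 2 := by nlinarith
  have h3 : 21 * T ^ 2 ≤ T ^ 3 := by nlinarith
  have h2T : 2 ^ T = 2 ^ (T - 5) * 2 ^ 5 := by rw [← pow_add, Nat.sub_add_cancel (by omega)]
  calc 9 * (ℓ * (31 * (2 * T + 1) + 2 * (3 * T ^ 2)))
      = ℓ * (9 * (31 * (2 * T + 1) + 2 * (3 * T ^ 2))) := by ring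
    _ ≤ 2 ^ T * 2 ^ (T - 5) := Nat.mul_le_mul hℓ (by omega)
    _ = 2 ^ (2 * T - 5) := by rw [← pow_add]; congr 1; omega

theorem mul_abs_lt_one_of_abs_mul_two_pow_le_one {η : ℝ} {ℓ m : ℕ} (hℓ : 2 ≤ ℓ) (hm : m ≤ ℓ)
    (h : |η| * 2 ^ (15 * (ℓ - 1)) ≤ 1) : m * |η| < 1 := by
  have hlt : (m : ℝ) < 2 ^ (15 * (ℓ - 1)) := by
    exact_mod_cast hm.trans_lt (ℓ.lt_two_pow_self.trans_le
      (Nat.pow_le_pow_right two_pos (by omega)))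
  rcases (abs_nonneg η).eq_or_lt with h0 | h0 <;> nlinarith

theorem sum_natAbs_sub (T : ℕ) :
    ∑ l : Fin (2 * T + 1), ((l : ℤ) - T).natAbs = T * (T + 1) := by
  rw [← Finset.sum_range fun l => ((l : ℤ) - T).natAbs]
  induction T with
  | zero => simp
  | succ T ih =>
    have hshift (l : ℕ) : (((l + 1 : ℕ) : ℤ) - (T + 1 : ℕ)).natAbs = ((l : ℤ) - T).natAbs := by
      omega
    have hlast : (((2 * T + 1 : ℕ) : ℤ) - T).natAbs = T + 1 := by omega
    have hfirst : (((0 : ℕ) : ℤ) - (T + 1 : ℕ)).natAbs = T + 1 := by omega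
    rw [show 2 * (T + 1) + 1 = 2 * T + 1 + 1 + 1 by ring, Finset.sum_range_succ',
      Finset.sum_congr rfl fun l _ => hshift l, Finset.sum_range_succ, ih, hlast, hfirst]
    ring

theorem prod_two_mul_pow_mul_pow_eq (T K b B : ℕ) :
    ∏ j : Fin K × Fin (2 * T + 1),
      (2 * (2 ^ b) ^ (j.1 : ℕ) * 2 ^ (B * ((j.2 : ℤ) - T).natAbs) : ℝ) =
    2 ^ (K * (2 * T + 1) + b * (2 * T + 1) * ∑ k : Fin K, (k : ℕ) + B * K * (T * (T + 1))) := by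
  simp only [Finset.prod_mul_distrib, Finset.prod_const, Finset.prod_pow_eq_pow_sum,
    Fintype.sum_prod_type, Finset.sum_const, Finset.card_univ, Fintype.card_prod,
    Fintype.card_fin, smul_eq_mul, ← Finset.mul_sum, ← pow_mul, ← pow_add, sum_natAbs_sub]
  ring_nf

theorem prod_pow_le_two_pow {ι : Type*} [Fintype ι] {a : ℝ} {m n T : ℕ} {r : ι → ℕ} (ha0 : 0 ≤ a)
    (ha : a ≤ 2 ^ m) (hr : ∀ i, r i ≤ n) :
    ∏ i, a ^ (T * r i) ≤ 2 ^ (m * (T * n) * Fintype.card ι) := by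
  calc ∏ i, a ^ (T * r i) ≤ ∏ _i : ι, (2 ^ m) ^ (T * n) := by
        refine Finset.prod_le_prod (fun _ _ => by positivity) fun i _ => ?_
        exact (pow_le_pow_left₀ ha0 ha _).trans
          (pow_le_pow_right₀ (one_le_pow₀ one_le_two) (Nat.mul_le_mul_left _ (hr i)))
    _ = 2 ^ (m * (T * n) * Fintype.card ι) := by
        rw [Finset.prod_const, Finset.card_univ, ← pow_mul, ← pow_mul, ← mul_assoc]

theorem factorial_le_two_pow {N m : ℕ} (h : N ≤ 2 ^ m) : N.factorial ≤ 2 ^ (m * N) := by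
  calc N.factorial ≤ N ^ N := N.factorial_le_pow
    _ ≤ (2 ^ m) ^ N := by gcongr
    _ = 2 ^ (m * N) := (pow_mul 2 m N).symm

theorem nineteen_mul_le_of_nine_pow_le {P e : ℕ} (h : 9 ^ P ≤ 2 ^ e) : 19 * P ≤ 6 * e := by
  refine (Nat.pow_le_pow_iff_right (a := 2) (by norm_num)).mp ?_
  calc 2 ^ (19 * P) = (2 ^ 19) ^ P := pow_mul 2 19 P
    _ ≤ (9 ^ 6) ^ P := Nat.pow_le_pow_left (by norm_num) P
    _ = (9 ^ P) ^ 6 := pow_right_comm 9 6 P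
    _ ≤ (2 ^ e) ^ 6 := by gcongr
    _ = 2 ^ (6 * e) := by rw [← pow_mul, mul_comm]

theorem six_mul_exponent_lt {T K N σ P : ℕ} (hT : 21 ≤ T) (hK : K = 180 * T ^ 2)
    (hN : N = K * (2 * T + 1)) (hσ : σ * 2 + K = K ^ 2) (hP : P * 2 + N = N ^ 2) :
    6 * (2 * T * (T * (31 * (2 * T + 1))) * N + 2 * T * N +
      (N + (2 * T - 5) * (2 * T + 1) * σ +
        41 * (31 * (2 * T + 1) + 2 * (3 * T ^ 2)) * K * (T * (T + 1)))) < 19 * P := by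
  obtain ⟨t, rfl⟩ := Nat.exists_eq_add_of_le hT
  rw [show 2 * (21 + t) - 5 = 37 + 2 * t by omega]
  zify at *
  have key : 0 < 19 * ((N : ℤ) ^ 2 - N) - 6 * (2 * (2 * (21 + t) * ((21 + t) *
      (31 * (2 * (21 + t) + 1))) * N + 2 * (21 + t) * N + N) +
      (37 + 2 * t) * (2 * (21 + t) + 1) * (K ^ 2 - K) + 2 * (41 * (31 * (2 * (21 + t) + 1) +
        2 * (3 * (21 + t) ^ 2)) * K * ((21 + t) * (21 + t + 1)))) := by
    rw [hN, hK]
    ring_nf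
    positivity
  refine lt_of_mul_lt_mul_left (a := 2) ?_ zero_le_two
  linear_combination key + 6 * (37 + 2 * t) * (2 * (21 + t) + 1) * hσ - 19 * hP

theorem nine_pow_mul_abs_mul_le_one {η : ℝ} {T ℓ : ℕ} (hT : 21 ≤ T) (hℓ : 2 ^ (T - 1) ≤ ℓ)
    (h : |η| * 2 ^ (15 * (ℓ - 1)) ≤ 1) :
    (9 : ℝ) ^ (180 * T ^ 2 * (2 * T + 1)) *
      ((31 * (2 * T + 1) : ℕ) * |η| * (180 * T ^ 2 : ℕ)) ≤ 1 := by
  calc (9 : ℝ) ^ (180 * T ^ 2 * (2 * T + 1)) *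
        ((31 * (2 * T + 1) : ℕ) * |η| * (180 * T ^ 2 : ℕ))
      = |η| * (9 ^ (180 * T ^ 2 * (2 * T + 1)) *
          (31 * (2 * T + 1) * (180 * T ^ 2)) : ℕ) := by push_cast; ring
    _ ≤ |η| * (2 ^ (15 * (ℓ - 1)) : ℕ) := by gcongr; exact nine_pow_mul_le_two_pow hT hℓ
    _ ≤ 1 := by exact_mod_cast h

theorem sum_fin_val_mul_two_add (n : ℕ) : (∑ k : Fin n, (k : ℕ)) * 2 + n = n ^ 2 := by
  rw [Fin.sum_univ_eq_sum_range (fun k => k), Finset.sum_range_id_mul_two, Nat.mul_sub_one, sq,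
    Nat.sub_add_cancel (Nat.le_mul_self n)]

theorem prod_pow_mul_lt_one {ι : Type*} [Fintype ι] {T K : ℕ} {a D : ℝ} {r : ι → ℕ} (hT : 21 ≤ T)
    (hK : K = 180 * T ^ 2) (hι : Fintype.card ι = K * (2 * T + 1)) (ha0 : 0 ≤ a)
    (ha : a ≤ 2 ^ (2 * T)) (hr : ∀ i, r i ≤ 31 * (2 * T + 1)) (hD : 0 ≤ D)
    (hup : D * 9 ^ (Fintype.card ι * (Fintype.card ι - 1) / 2) ≤ (Fintype.card ι).factorial *
      2 ^ (K * (2 * T + 1) + (2 * T - 5) * (2 * T + 1) * ∑ k : Fin K, (k : ℕ) +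
        41 * (31 * (2 * T + 1) + 2 * (3 * T ^ 2)) * K * (T * (T + 1)))) :
    (∏ i, a ^ (T * r i)) * D < 1 := by
  by_contra! hlow
  have hσ := sum_fin_val_mul_two_add K
  have hfact := factorial_le_two_pow (N := Fintype.card ι) (m := 2 * T) <| by
    rw [hι, hK, mul_comm]
    refine le_trans (Nat.mul_le_mul_right _ ?_) (quadratic_mul_linear_le_two_pow hT)
    omega
  generalize hN : Fintype.card ι = N at *
  have hP := sum_fin_val_mul_two_add N
  rw [Fin.sum_univ_eq_sum_range (fun k => k), Finset.sum_range_id] at hP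
  generalize N * (N - 1) / 2 = P at *
  generalize ∑ k : Fin K, (k : ℕ) = σ at *
  have hprod := hN ▸ prod_pow_le_two_pow (T := T) ha0 ha hr
  have hexp := six_mul_exponent_lt hT hK hι hσ hP
  rw [← hι] at hup
  generalize N + (2 * T - 5) * (2 * T + 1) * σ +
    41 * (31 * (2 * T + 1) + 2 * (3 * T ^ 2)) * K * (T * (T + 1)) = e at *
  have hnine : (9 : ℝ) ^ P ≤ 2 ^ (2 * T * (T * (31 * (2 * T + 1))) * N + 2 * T * N + e) := by
    calc (9 : ℝ) ^ P ≤ (∏ i, a ^ (T * r i)) * D * 9 ^ P :=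
          le_mul_of_one_le_left (by positivity) hlow
      _ = (∏ i, a ^ (T * r i)) * (D * 9 ^ P) := mul_assoc _ _ _
      _ ≤ 2 ^ (2 * T * (T * (31 * (2 * T + 1))) * N) * (2 ^ (2 * T * N) * 2 ^ e) := by
        refine mul_le_mul hprod (hup.trans ?_) (by positivity) (by positivity)
        gcongr
        exact_mod_cast hfact
      _ = _ := by rw [← mul_assoc, ← pow_add, ← pow_add]
  exact hexp.not_ge (nineteen_mul_le_of_nine_pow_le (by exact_mod_cast hnine))

end Parameters

section MainEstimate

/- Gel'fond's method: were `(α ^ ℓ).re ^ 2 ≤ α.norm`, the argument of `α` would be extremely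
close to a rational multiple of `π` with denominator `2 * ℓ`, and the determinant of an
interpolation matrix would be too small for a nonzero element of `ℤ√d`. The factors `180`, `30` and
`3` in the parameters are chosen so that the bounds contradict each other for `T` at least `21`. -/
theorem norm_lt_sq_re_pow_of_one_le_re {d : ℤ} (hd : d < 0) {α : ℤ√d} {ℓ T : ℕ} (hα : 1 ≤ α.re)
    (hℓ : ℓ.Prime) (hT : 21 ≤ T) (hℓT : 2 ^ (T - 1) ≤ ℓ) (hℓT' : ℓ ≤ 2 ^ T)
    (hnorm : 2 ^ 30 ≤ α.norm) (hnorm' : α.norm ≤ 2 ^ (2 * T)) : α.norm < (α ^ ℓ).re ^ 2 := by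
  by_contra! hre
  have h2T : 2 ^ 20 ≤ 2 ^ (T - 1) := Nat.pow_le_pow_right two_pos (by omega)
  have hα0 : 0 ≤ α.re := by omega
  have hsq := normSq_zsqrtdToComplex hd α
  have hnormR : (2 : ℝ) ^ (2 * 15) ≤ α.norm := by exact_mod_cast hnorm
  obtain ⟨M, η, hMℓ, hη1, hη, hM⟩ := exists_int_not_dvd_of_re_pow_sq_le (ℓ := ℓ)
    (z := zsqrtdToComplex hd α) (by rw [zsqrtdToComplex_re]; exact_mod_cast hα)
    (by rw [hsq]; exact lt_of_lt_of_le (by norm_num) hnormR) (by omega) (by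
      rw [← map_pow, zsqrtdToComplex_re, hsq]
      exact_mod_cast hre)
  replace hη : |η| * 2 ^ (15 * (ℓ - 1)) ≤ 1 := abs_mul_two_pow_le_one hnormR (hsq ▸ hη)
  have hcub := cubic_le_two_pow hT
  have h2T' : 2 * 2 ^ (T - 1) = 2 ^ T := mul_pow_sub_one (by omega) 2
  have hLR : 2 * T + 1 + 30 * (2 * T + 1) ≤ ℓ := by nlinarith
  obtain ⟨r, s, hr, hs, hinj, hdet⟩ := exists_expPolyMatrix_det_ne_zero (K := 180 * T ^ 2)
    (L := 2 * T + 1) (R := 30 * (2 * T + 1)) (S := 3 * T ^ 2) hℓ hMℓ hM hLR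
    (mul_abs_lt_one_of_abs_mul_two_pow_le_one hℓ.two_le hLR hη) (by ring_nf; omega) T
  replace hr (i) : r i ≤ 31 * (2 * T + 1) := (hr i).trans_eq (by ring)
  have hlow := one_le_prod_norm_pow_mul_norm_det hd (T := T)
    (by rintro rfl; simp at hα) (fun j => by rw [abs_le]; omega) hdet
  have hup := norm_det_expPolyMatrix_le (Y := 2 ^ (2 * T - 5))
    (Complex.abs_arg_le_pi_div_two_iff.mpr (by rw [zsqrtdToComplex_re]; exact_mod_cast hα0))
    hM hη1 hℓ.pos hr hs hinj (one_le_pow₀ one_le_two)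
    (by exact_mod_cast nine_mul_mul_le_two_pow hT hℓT') (fun j => j.1.2.le)
    (by simpa only [Fintype.card_prod, Fintype.card_fin]
      using nine_pow_mul_abs_mul_le_one hT hℓT hη) fun j => (j.2 : ℤ) - T
  rw [prod_two_mul_pow_mul_pow_eq] at hup
  exact (prod_pow_mul_lt_one hT rfl (by simp) (by exact_mod_cast Zsqrtd.norm_nonneg hd.le α)
    (by exact_mod_cast hnorm') hr (norm_nonneg _) hup).not_ge hlow

theorem norm_lt_sq_re_pow {d : ℤ} (hd : d < 0) {α : ℤ√d} {ℓ : ℕ} (hα : α.re ≠ 0) (hℓ : ℓ.Prime)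
    (hℓ' : 2 ^ 20 ≤ ℓ) (hnorm : 2 ^ 30 ≤ α.norm) (hnorm' : α.norm ≤ ℓ ^ 2) :
    α.norm < (α ^ ℓ).re ^ 2 := by
  wlog hpos : 1 ≤ α.re generalizing α
  · have hneg := this (α := -α) (by simpa using hα) (by rwa [Zsqrtd.norm_neg])
      (by rwa [Zsqrtd.norm_neg]) (by rw [Zsqrtd.re_neg]; omega)
    have hodd : Odd ℓ := hℓ.odd_of_ne_two (by omega)
    rwa [Zsqrtd.norm_neg, hodd.neg_pow, Zsqrtd.re_neg, neg_sq] at hneg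
  have hlog : 20 ≤ Nat.log 2 ℓ := Nat.le_log_of_pow_le one_lt_two hℓ'
  have hlt : ℓ < 2 ^ (Nat.log 2 ℓ + 1) := Nat.lt_pow_succ_log_self one_lt_two ℓ
  refine norm_lt_sq_re_pow_of_one_le_re hd hpos hℓ (T := Nat.log 2 ℓ + 1) (by omega)
    (Nat.pow_log_le_self 2 hℓ.ne_zero) hlt.le hnorm (hnorm'.trans ?_)
  rw [mul_comm 2, pow_mul]
  exact_mod_cast Nat.pow_le_pow_left hlt.le 2

end MainEstimate

section Zsqrtd

variable {d : ℤ} {α : ℤ√d} {n : ℕ}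

theorem zsqrtd_im_dvd_im_pow (α : ℤ√d) (n : ℕ) : α.im ∣ (α ^ n).im := by
  induction n with
  | zero => simp
  | succ n ih =>
    rw [pow_succ, Zsqrtd.im_mul]
    exact (dvd_mul_left _ _).add (ih.mul_right _)

theorem odd_of_odd_zsqrtd_im_pow (h : Odd (α ^ n).im) : Odd n := by
  by_contra hn
  obtain ⟨k, rfl⟩ := Nat.not_odd_iff_even.mp hn
  rw [pow_add, Zsqrtd.im_mul] at h
  exact Int.not_odd_iff_even.mpr ⟨(α ^ k).re * (α ^ k).im, by ring⟩ h

theorem even_zsqrtd_re_of_odd (hd : Odd d) (him : Odd α.im) (hnorm : Odd α.norm) :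
    Even α.re := by
  rw [Zsqrtd.norm_def] at hnorm
  simpa [hd, him, Int.odd_sub', Int.odd_mul, Int.even_mul] using hnorm

theorem zsqrtd_re_pow_add_two (α : ℤ√d) (n : ℕ) :
    (α ^ (n + 2)).re = 2 * α.re * (α ^ (n + 1)).re - α.norm * (α ^ n).re := by
  rw [pow_succ _ (n + 1), pow_succ _ n]
  simp only [Zsqrtd.re_mul, Zsqrtd.im_mul, Zsqrtd.norm_def]
  ring

theorem zsqrtd_re_dvd_re_pow (α : ℤ√d) (hn : Odd n) : α.re ∣ (α ^ n).re := by
  obtain ⟨k, rfl⟩ := hn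
  induction k with
  | zero => simp
  | succ k ih =>
    rw [show 2 * (k + 1) + 1 = 2 * k + 1 + 2 by ring, zsqrtd_re_pow_add_two]
    exact (((dvd_refl _).mul_left _).mul_right _).sub (ih.mul_left _)

theorem zsqrtd_two_mul_re_pow_modEq (α : ℤ√d) (hn : n ≠ 0) :
    (2 * α.re) ^ n ≡ 2 * (α ^ n).re [ZMOD α.norm] := by
  induction n, Nat.one_le_iff_ne_zero.mpr hn using Nat.le_induction with
  | base => simp only [pow_one, Int.ModEq.refl]
  | succ n h1 ih =>
    obtain ⟨n, rfl⟩ := Nat.exists_eq_succ_of_ne_zero (Nat.one_le_iff_ne_zero.mp h1)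
    rw [zsqrtd_re_pow_add_two, pow_succ]
    refine ((ih n.succ_ne_zero).mul_right _).trans (Int.modEq_iff_dvd.mpr ?_)
    exact ⟨-2 * (α ^ n).re, by ring⟩

theorem zsqrtd_norm_eq_of_norm_pow_eq (hn : Odd n) {a : ℤ} (h : (α ^ n).norm = a ^ n) :
    α.norm = a :=
  hn.pow_injective (((map_pow Zsqrtd.normMonoidHom α n).symm).trans h)

theorem zsqrtd_sq_re_lt_norm (hd : d < 0) (him : α.im ≠ 0) : α.re ^ 2 < α.norm := by
  rw [Zsqrtd.norm_def]
  nlinarith [mul_self_pos.mpr him]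

end Zsqrtd

section Wieferich

variable {p q j ℓ : ℕ}

theorem mul_pow_eq_of_pow_eq_mul {M : Type*} [CommMonoid M] {a b e : M} {n : ℕ} (hn : Odd n)
    (he : e ^ 2 = 1) (h : a ^ n = e * b) : (e * a) ^ n = b := by
  obtain ⟨k, rfl⟩ := hn
  rw [mul_pow, h, ← mul_assoc, ← pow_succ, show 2 * k + 1 + 1 = 2 * (k + 1) by ring, pow_mul, he,
    one_pow, one_mul]

theorem pow_modEq_one_of_mul_pow_modEq {a b w N : ℤ} {k n : ℕ} (hk : Even k)
    (ha : a ^ k ≡ 1 [ZMOD N]) (hw : w ^ 2 = 1) (h : (a * w) ^ n ≡ b [ZMOD N]) :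
    b ^ k ≡ 1 [ZMOD N] := by
  have hwk : w ^ k = 1 := by
    obtain ⟨m, rfl⟩ := hk.two_dvd
    rw [pow_mul, hw, one_pow]
  calc b ^ k ≡ ((a * w) ^ n) ^ k [ZMOD N] := (h.pow k).symm
    _ = (a ^ k) ^ n := by rw [pow_right_comm, mul_pow, hwk, mul_one]
    _ ≡ 1 ^ n [ZMOD N] := ha.pow n
    _ = 1 := one_pow n

theorem dvd_pow_two_mul_sub_one_of_pow_modEq {a x N : ℤ} {m : ℕ} (hcop : IsCoprime N a)
    (hx : x ^ 2 = a ^ 2) (h : x ^ (m + 1) ≡ a [ZMOD N]) : N ∣ a ^ (2 * m) - 1 := by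
  have hsq : a ^ 2 ≡ a ^ (2 * (m + 1)) [ZMOD N] := by
    rw [pow_mul, ← hx, ← pow_mul, mul_comm 2, pow_mul, hx]
    exact (h.pow 2).symm
  refine (hcop.pow_right (n := 2)).dvd_of_dvd_mul_left (hsq.dvd.trans (dvd_of_eq ?_))
  ring

theorem emultiplicity_pow_pred_sub_one_eq_one {a : ℕ} (hp : p.Prime) (hpa : ¬ p ∣ a)
    (ha : ¬ a ^ (p - 1) ≡ 1 [MOD p ^ 2]) : emultiplicity (p : ℤ) ((a : ℤ) ^ (p - 1) - 1) = 1 := by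
  have hfermat : (p : ℤ) ∣ (a : ℤ) ^ (p - 1) - 1 := by
    refine (Int.ModEq.pow_card_sub_one_eq_one hp ?_).symm.dvd
    exact Nat.isCoprime_iff_coprime.mpr ((hp.coprime_iff_not_dvd.mpr hpa).symm)
  have hsq : ¬ (p : ℤ) ^ 2 ∣ (a : ℤ) ^ (p - 1) - 1 := fun h => ha <| by
    rw [← Int.natCast_modEq_iff]
    exact_mod_cast (Int.modEq_of_dvd h).symm
  exact_mod_cast emultiplicity_eq_coe.mpr ⟨(pow_one (p : ℤ)).symm ▸ hfermat, hsq⟩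

theorem pow_pred_dvd_of_pow_dvd_pow_sub_one {a m : ℕ} (hp : p.Prime) (hp2 : Odd p)
    (hpa : ¬ p ∣ a) (ha : ¬ a ^ (p - 1) ≡ 1 [MOD p ^ 2]) (h : (p : ℤ) ^ j ∣ (a : ℤ) ^ m - 1) :
    p ^ (j - 1) ∣ m := by
  have hone := emultiplicity_pow_pred_sub_one_eq_one hp hpa ha
  have hdvd : (p : ℤ) ^ j ∣ ((a : ℤ) ^ (p - 1)) ^ m - 1 ^ m := by
    rw [pow_right_comm, one_pow]
    exact h.trans (sub_one_dvd_pow_sub_one _ _)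
  have hlift := Int.emultiplicity_pow_sub_pow hp hp2 (x := (a : ℤ) ^ (p - 1)) (y := 1)
    (dvd_of_emultiplicity_pos (hone ▸ one_pos))
    (fun h => hpa (by exact_mod_cast Int.Prime.dvd_pow' hp h)) m
  have hle := le_emultiplicity_of_pow_dvd hdvd
  rw [hlift, hone] at hle
  refine pow_dvd_of_le_emultiplicity ?_
  push_cast
  exact tsub_le_iff_left.mpr hle

theorem four_mul_sq_lt_pow {n : ℕ} (hp : 4 ≤ p) (hq : q < p) (hn : 3 ≤ n) :
    4 * q ^ 2 < p ^ n := by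
  calc 4 * q ^ 2 < 4 * p ^ 2 := by gcongr
    _ ≤ p * p ^ 2 := by gcongr
    _ = p ^ 3 := (pow_succ' p 2).symm
    _ ≤ p ^ n := Nat.pow_le_pow_right (by omega) hn

theorem odd_and_odd_of_four_mul_sq_sub_pow_eq {n : ℕ} {c d : ℤ} (hp : Odd p)
    (h : 4 * (q : ℤ) ^ 2 - (p : ℤ) ^ n = c ^ 2 * d) : Odd c ∧ Odd d := by
  have hodd : Odd (c ^ 2 * d) := by
    rw [← h]
    exact Even.sub_odd ⟨2 * q ^ 2, by ring⟩ (by exact_mod_cast hp.pow)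
  exact (Int.odd_mul.mp hodd).imp_left fun hc => (Int.odd_pow' two_ne_zero).mp hc

theorem two_pow_le_pow_of_wieferich (hp : p.Prime) (hmod : p % 4 = 1)
    (hw : 2 ^ (p - 1) ≡ 1 [MOD p ^ 2]) (hq : q.Prime) (hqp : q ∣ p - 2) (hj : 2 ≤ j)
    (hlt : 4 * q ^ 2 < p ^ j) : 2 ^ 19 ≤ p ^ (j - 1) ∧ 2 ^ 30 ≤ p ^ j := by
  rcases lt_or_ge p (2 ^ 19) with hsmall | hlarge
  · obtain rfl := eq_1093_of_two_pow_modEq_one hmod hp.ne_one hsmall hw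
    obtain rfl : q = 1091 := (Nat.prime_dvd_prime_iff_eq hq (by norm_num)).mp hqp
    have hj3 : j ≠ 2 := by
      rintro rfl
      norm_num at hlt
    have hpow := Nat.pow_le_pow_right (n := 1093) (by norm_num) (show 3 ≤ j by omega)
    have hpow' := Nat.pow_le_pow_right (n := 1093) (by norm_num) (show 2 ≤ j - 1 by omega)
    omega
  · have hpow := Nat.pow_le_pow_left hlarge
    exact ⟨(hpow 1).trans (Nat.pow_le_pow_right hp.pos (by omega)) |>.trans' (by norm_num),
      (hpow 2).trans (Nat.pow_le_pow_right hp.pos hj) |>.trans' (by norm_num)⟩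

theorem two_mul_pow_lt_of_pow_dvd_pred (hp : Odd p) (hℓ : ℓ.Prime) (hℓ' : Odd ℓ)
    (h : p ^ j ∣ ℓ - 1) : 2 * p ^ j < ℓ := by
  have hdvd := Nat.Coprime.mul_dvd_of_dvd_of_dvd (Nat.coprime_two_left.mpr hp.pow)
    (Nat.Odd.sub_odd hℓ' odd_one).two_dvd h
  have := Nat.le_of_dvd (Nat.sub_pos_of_lt hℓ.one_lt) hdvd
  have := hℓ.pos
  omega

theorem four_mul_pow_pred_modEq (hw : 2 ^ (p - 1) ≡ 1 [MOD p ^ 2]) :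
    (4 * q) ^ (p - 1) ≡ q ^ (p - 1) [MOD p ^ 2] := by
  have h4 := (hw.mul hw).mul_right (q ^ (p - 1))
  rwa [← mul_pow, ← mul_pow, one_mul, one_mul] at h4

theorem pow_pred_modEq_one_of_four_mul_pow_modEq {w : ℤ} (hp : Odd p)
    (hw : 2 ^ (p - 1) ≡ 1 [MOD p ^ 2]) (hw1 : w ^ 2 = 1)
    (h : (4 * w) ^ ℓ ≡ (4 * q : ℕ) [ZMOD p ^ 2]) : q ^ (p - 1) ≡ 1 [MOD p ^ 2] := by
  have h4 : (4 : ℤ) ^ (p - 1) ≡ 1 [ZMOD p ^ 2] := by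
    have := four_mul_pow_pred_modEq (q := 1) hw
    rw [mul_one, one_pow] at this
    exact_mod_cast Int.natCast_modEq_iff.mpr this
  have h4q := pow_modEq_one_of_mul_pow_modEq (Nat.Odd.sub_odd hp odd_one) h4 hw1 h
  exact (four_mul_pow_pred_modEq hw).symm.trans (Int.natCast_modEq_iff.mp (by exact_mod_cast h4q))

theorem pow_pred_dvd_pred_of_pow_modEq {x : ℤ} (hp : p.Prime) (hp2 : Odd p)
    (hw : 2 ^ (p - 1) ≡ 1 [MOD p ^ 2]) (hpq : ¬ p ∣ q) (hqnw : ¬ q ^ (p - 1) ≡ 1 [MOD p ^ 2])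
    (hℓ : 1 ≤ ℓ) (hx : x ^ 2 = (4 * q : ℕ) ^ 2) (h : x ^ ℓ ≡ (4 * q : ℕ) [ZMOD p ^ j]) :
    p ^ (j - 1) ∣ ℓ - 1 := by
  have hpo2 : p.Coprime 2 := Nat.coprime_two_right.mpr hp2
  have hp4q : p.Coprime (4 * q) :=
    (hpo2.pow_right 2).mul_right (hp.coprime_iff_not_dvd.mpr hpq)
  have hcop : IsCoprime ((p : ℤ) ^ j) (4 * q : ℕ) := (Nat.isCoprime_iff_coprime.mpr hp4q).pow_left
  rw [← Nat.sub_add_cancel hℓ] at h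
  refine (hpo2.pow_left _).dvd_of_dvd_mul_left (pow_pred_dvd_of_pow_dvd_pow_sub_one hp hp2
    (hp.coprime_iff_not_dvd.mp hp4q) (fun h4q => hqnw ?_)
    (dvd_pow_two_mul_sub_one_of_pow_modEq hcop hx h))
  exact (four_mul_pow_pred_modEq hw).symm.trans h4q

theorem norm_lt_sq_re_pow_of_wieferich {d : ℤ} {α : ℤ√d} (hp : p.Prime) (hmod : p % 4 = 1)
    (hw : 2 ^ (p - 1) ≡ 1 [MOD p ^ 2]) (hq : q.Prime) (hqp : q ∣ p - 2)
    (hqnw : ¬ q ^ (p - 1) ≡ 1 [MOD p ^ 2]) (hj : 2 ≤ j) (hℓ : ℓ.Prime) (hℓ' : Odd ℓ) (hd : d < 0)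
    (hnorm : α.norm = p ^ j) (him : α.im ≠ 0) (hre : α.re ^ 2 = (2 * q) ^ 2)
    (hcong : (2 * α.re) ^ ℓ ≡ (4 * q : ℕ) [ZMOD p ^ j]) : α.norm < (α ^ ℓ).re ^ 2 := by
  have hpo : Odd p := Nat.odd_iff.mpr (by omega)
  have hp1 := hp.one_lt
  have hq1 := hq.pos
  have hqp' : q ≤ p - 2 := Nat.le_of_dvd (by omega) hqp
  have hlt : 4 * q ^ 2 < p ^ j := by
    have hlt := zsqrtd_sq_re_lt_norm hd him
    rw [hre, hnorm, mul_pow] at hlt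
    exact_mod_cast hlt
  have hdvd : p ^ (j - 1) ∣ ℓ - 1 := by
    refine pow_pred_dvd_pred_of_pow_modEq hp hpo hw (Nat.not_dvd_of_pos_of_lt hq1 (by omega)) hqnw
      hℓ.one_le ?_ hcong
    rw [mul_pow, hre]
    push_cast
    ring
  have hℓp := two_mul_pow_lt_of_pow_dvd_pred hpo hℓ hℓ' hdvd
  obtain ⟨hp19, hp30⟩ := two_pow_le_pow_of_wieferich hp hmod hw hq hqp hj hlt
  refine norm_lt_sq_re_pow hd ?_ hℓ (by omega) (hnorm ▸ by exact_mod_cast hp30) ?_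
  · exact pow_ne_zero_iff two_ne_zero |>.mp (hre ▸ by positivity)
  · have hpℓ : p ^ j ≤ ℓ ^ 2 := by
      calc p ^ j ≤ p ^ ((j - 1) * 2) := Nat.pow_le_pow_right hp.pos (by omega)
        _ = (p ^ (j - 1)) ^ 2 := pow_mul p (j - 1) 2
        _ ≤ ℓ ^ 2 := Nat.pow_le_pow_left (by omega) 2
    exact_mod_cast hnorm.trans_le (by exact_mod_cast hpℓ)

theorem sq_eq_one_or_sq_eq_sq_of_dvd_prime {w : ℤ} (hq : q.Prime) (h : w ∣ q) :
    w ^ 2 = 1 ∨ w ^ 2 = (q : ℤ) ^ 2 := by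
  refine ((Nat.dvd_prime hq).mp (Int.natAbs_dvd_natAbs.mpr h)).imp (fun h1 => ?_) fun hwq => ?_
  · exact (Int.natAbs_eq_iff_sq_eq (b := 1)).mp h1
  · exact (Int.natAbs_eq_iff_sq_eq (b := (q : ℤ))).mp hwq

theorem zsqrtd_pow_ne_of_wieferich {c d : ℤ} (hp : p.Prime) (hmod : p % 4 = 1)
    (hw : 2 ^ (p - 1) ≡ 1 [MOD p ^ 2]) (hq : q.Prime) (hqp : q ∣ p - 2)
    (hqnw : ¬ q ^ (p - 1) ≡ 1 [MOD p ^ 2]) (hj : 2 ≤ j) (hℓ : ℓ.Prime) (hℓ' : Odd ℓ)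
    (hfac : 4 * (q : ℤ) ^ 2 - (p : ℤ) ^ (ℓ * j) = c ^ 2 * d) (hd : d < 0) (β : ℤ√d) :
    β ^ ℓ ≠ ⟨2 * q, c⟩ := by
  intro hβ
  have hpo : Odd p := Nat.odd_iff.mpr (by omega)
  obtain ⟨hco, hdo⟩ := odd_and_odd_of_four_mul_sq_sub_pow_eq hpo hfac
  have hre : (β ^ ℓ).re = 2 * q := congrArg Zsqrtd.re hβ
  have him : Odd β.im := by
    obtain ⟨k, hk⟩ : β.im ∣ c := by simpa only [hβ] using zsqrtd_im_dvd_im_pow β ℓ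
    exact (Int.odd_mul.mp (hk ▸ hco)).1
  have hnorm : β.norm = p ^ j := by
    refine zsqrtd_norm_eq_of_norm_pow_eq hℓ' ?_
    rw [hβ, Zsqrtd.norm_def, ← pow_mul, mul_comm j]
    linear_combination hfac
  obtain ⟨w, hβw⟩ := (even_zsqrtd_re_of_odd hdo him
    (hnorm ▸ by exact_mod_cast hpo.pow)).two_dvd
  have hwq : w ∣ q := by
    refine (Int.mul_dvd_mul_iff_left two_ne_zero).mp ?_
    rw [← hβw, ← hre]
    exact zsqrtd_re_dvd_re_pow β hℓ'
  have hcong : (2 * β.re) ^ ℓ ≡ (4 * q : ℕ) [ZMOD p ^ j] := by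
    rw [show ((4 * q : ℕ) : ℤ) = 2 * (β ^ ℓ).re by rw [hre]; push_cast; ring, ← hnorm]
    exact zsqrtd_two_mul_re_pow_modEq β hℓ.ne_zero
  rcases sq_eq_one_or_sq_eq_sq_of_dvd_prime hq hwq with hw1 | hw2
  · rw [show 2 * β.re = 4 * w by rw [hβw]; ring] at hcong
    exact hqnw (pow_pred_modEq_one_of_four_mul_pow_modEq hpo hw hw1
      (hcong.of_dvd (pow_dvd_pow _ hj)))
  · have hre2 : β.re ^ 2 = (2 * q) ^ 2 := by rw [hβw, mul_pow, mul_pow, hw2]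
    have him0 : β.im ≠ 0 := by
      rintro h
      simp [h] at him
    have hlt := norm_lt_sq_re_pow_of_wieferich hp hmod hw hq hqp hqnw hj hℓ hℓ' hd hnorm him0 hre2
      hcong
    rw [hre, ← hre2] at hlt
    exact lt_asymm (zsqrtd_sq_re_lt_norm hd him0) hlt

end Wieferich

theorem stmt_18_general {p q n ℓ : ℕ} {c d : ℤ} (hp : p.Prime) (hmod : p % 4 = 1)
    (hw : 2 ^ (p - 1) ≡ 1 [MOD p ^ 2]) (hq : q.Prime) (hqp : q ∣ p - 2)
    (hqnw : ¬ q ^ (p - 1) ≡ 1 [MOD p ^ 2]) (hn : 1 < n ∧ ¬ n.Prime)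
    (hfac : 4 * (q : ℤ) ^ 2 - (p : ℤ) ^ n = c ^ 2 * d) (hℓ : ℓ.Prime) (hdvd : ℓ ∣ n) :
    ¬ ∃ u v ε : ℤ, (ε = 1 ∨ ε = -1) ∧ (⟨u, v⟩ : ℤ√d) ^ ℓ = (ε : ℤ√d) * ⟨2 * q, c⟩ := by
  rintro ⟨u, v, ε, hε, hα⟩
  obtain ⟨j, rfl⟩ := hdvd
  have hj : 2 ≤ j := by
    by_contra! hj
    interval_cases j <;> simp_all
  have hp1 := hp.one_lt
  have hqp' : q ≤ p - 2 := Nat.le_of_dvd (by omega) hqp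
  have hd : d < 0 := by
    have hlt := four_mul_sq_lt_pow (p := p) (q := q) (n := ℓ * j) (by omega) (by omega)
      (by nlinarith [hℓ.two_le])
    refine neg_of_mul_neg_right (a := c ^ 2) ?_ (sq_nonneg c)
    rw [← hfac, sub_neg]
    exact_mod_cast hlt
  have hεc : Odd (ε * c) := by
    obtain ⟨hc, -⟩ := odd_and_odd_of_four_mul_sq_sub_pow_eq (Nat.odd_iff.mpr (by omega)) hfac
    exact Int.odd_mul.mpr ⟨by rcases hε with rfl | rfl <;> decide, hc⟩
  have hℓ' : Odd ℓ := odd_of_odd_zsqrtd_im_pow (α := (⟨u, v⟩ : ℤ√d)) (by simpa [hα] using hεc)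
  have hε2 : (ε : ℤ√d) ^ 2 = 1 := by rcases hε with rfl | rfl <;> simp
  exact zsqrtd_pow_ne_of_wieferich hp hmod hw hq hqp hqnw hj hℓ hℓ' hfac hd _
    (mul_pow_eq_of_pow_eq_mul hℓ' hε2 hα)

/-- Let `p` be a prime with `p ≡ 1 (mod 4)` and `2^(p−1) ≡ 1 (mod p^2)`, let `q1` be a prime
factor of `p − 2` such that `q1^(p−1) ≢ 1 (mod p^2)`, let `n` be a composite number, let `d0`
be the squarefree part of `4·q1^2 − p^n` and `c` the positive integer with
`4·q1^2 − p^n = c^2·d0`. Then for any prime `p4` dividing `n`, there are no integers `u`, `v`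
and sign `ε ∈ {1, −1}` such that `(u + v·√d0)^p4 = ε·(2·q1 + c·√d0)` in `ℤ[√d0]`. -/
theorem stmt_18 (p : ℕ) (hp : p.Prime) (hmod : p % 4 = 1)
    (hw : 2 ^ (p - 1) ≡ 1 [MOD p ^ 2])
    (q1 : ℕ) (hq1 : q1.Prime) (hq1dvd : q1 ∣ p - 2)
    (hq1nw : ¬ (q1 ^ (p - 1) ≡ 1 [MOD p ^ 2]))
    (n : ℕ) (hcomp : 1 < n ∧ ¬ n.Prime)
    (d0 : ℤ) (hd0 : Squarefree d0) (c : ℤ) (hc : 0 < c)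
    (hfac : 4 * (q1 : ℤ) ^ 2 - (p : ℤ) ^ n = c ^ 2 * d0)
    (p4 : ℕ) (hp4 : p4.Prime) (hdvd : p4 ∣ n) :
    ¬ ∃ (u v ε : ℤ), (ε = 1 ∨ ε = -1) ∧
      (⟨u, v⟩ : ℤ√d0) ^ p4 = (ε : ℤ√d0) * ⟨2 * (q1 : ℤ), c⟩ :=
  stmt_18_general hp hmod hw hq1 hq1dvd hq1nw hcomp hfac hp4 hdvd
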